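/- Every τ-tilting-finite quasitilted algebra over an algebraically closed field K is representation-finite. -/

import Mathlib

/- Formalization of statements from
   "Report on the finiteness of silting objects"
   by T. Aihara, T. Honma, K. Miyamoto, Q. Wang. -/

open CategoryTheory CategoryTheory.Limits

universe u v w

noncomputable section
namespace PaperSilting
/-! ### Module-theoretic notions.

We model right `Λ`-modules as left modules over the opposite ring; all the
definitions below are stated for left modules over a ring `R` and are applied
with `R := Λᵐᵒᵖ`. -/

/-- The category of `R`-modules (in `Type 0`). -/
abbrev ModCat (R : Type) [Ring R] := ModuleCat.{0} R

variable {R : Type} [Ring R]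

/-- The module object `M` is finitely generated. -/
def IsFGMod {R : Type} [Ring R] (M : ModCat R) : Prop := Module.Finite R M

/-- Indecomposable module object. -/
def IsIndecMod {R : Type} [Ring R] (M : ModCat R) : Prop :=
  ¬ IsZero M ∧ ∀ A B : ModCat R, Nonempty (M ≅ A ⊞ B) → IsZero A ∨ IsZero B

/-- `N` belongs to `add M`, i.e. `N` is a direct summand of a finite direct sum
of copies of `M`. -/
def MemAddMod {R : Type} [Ring R] (N M : ModCat R) : Prop :=
  ∃ (k : ℕ) (g : N ⟶ ⨁ (fun _ : Fin k => M)) (h : (⨁ (fun _ : Fin k => M)) ⟶ N),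
    g ≫ h = 𝟙 N

/-- A basic module: it has no direct summand of the form `N ⊕ N` with `N ≠ 0`. -/
def IsBasicMod {R : Type} [Ring R] (M : ModCat R) : Prop :=
  ∀ N X : ModCat R, Nonempty (M ≅ (N ⊞ N) ⊞ X) → IsZero N

/-- `M` is τ-rigid, i.e. `Hom(M, τM) = 0`: there is a projective presentation
`P₁ → P₀ → M → 0` by finitely generated projectives such that
`Hom(P₀, M) → Hom(P₁, M)` is surjective (Adachi–Iyama–Reiten). -/
def IsTauRigidMod {R : Type} [Ring R] (M : ModCat R) : Prop :=
  ∃ (P₁ P₀ : ModCat R) (f : P₁ ⟶ P₀) (g : P₀ ⟶ M),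
    Projective P₁ ∧ Projective P₀ ∧ IsFGMod P₁ ∧ IsFGMod P₀ ∧
    Function.Surjective g ∧ Function.Exact f g ∧
    ∀ h : P₁ ⟶ M, ∃ k : P₀ ⟶ M, f ≫ k = h

/-- A τ-rigid pair `(M, P)`: `M` is a τ-rigid module and `P` is a finitely
generated projective with `Hom(P, M) = 0`. -/
def IsTauRigidPairMod {R : Type} [Ring R] (M P : ModCat R) : Prop :=
  IsFGMod M ∧ IsTauRigidMod M ∧ IsFGMod P ∧ Projective P ∧ ∀ f : P ⟶ M, f = 0

/-- `M` is a support τ-tilting module: `(M, P)` is a maximal τ-rigid pair for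
some projective `P` (Adachi–Iyama–Reiten; equivalently, `M` is the `0`-th
cohomology of a two-term silting complex in `K^b(proj)`). -/
def IsSupportTauTiltingMod {R : Type} [Ring R] (M : ModCat R) : Prop :=
  ∃ P : ModCat R, IsTauRigidPairMod M P ∧
    ∀ N Q : ModCat R, IsTauRigidPairMod (M ⊞ N) (P ⊞ Q) → MemAddMod N M ∧ MemAddMod Q P

/-- The ring `R` admits only finitely many basic support τ-tilting modules up
to isomorphism. -/
def IsTauTiltingFiniteRing (R : Type) [Ring R] : Prop :=
  ∃ (n : ℕ) (f : Fin n → ModCat R),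
    ∀ M : ModCat R, IsSupportTauTiltingMod M → IsBasicMod M → ∃ i, Nonempty (M ≅ f i)

/-- The ring `R` admits only finitely many finitely generated indecomposable
modules up to isomorphism. -/
def IsRepFiniteRing (R : Type) [Ring R] : Prop :=
  ∃ (n : ℕ) (f : Fin n → ModCat R),
    ∀ M : ModCat R, IsFGMod M → IsIndecMod M → ∃ i, Nonempty (M ≅ f i)

/-- `R` has exactly `n` isomorphism classes of basic support τ-tilting modules. -/
def SupportTauTiltingCount (R : Type) [Ring R] (n : ℕ) : Prop :=
  ∃ f : Fin n → ModCat R,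
    (∀ i, IsSupportTauTiltingMod (f i) ∧ IsBasicMod (f i)) ∧
    (∀ i j, Nonempty (f i ≅ f j) → i = j) ∧
    (∀ M : ModCat R, IsSupportTauTiltingMod M → IsBasicMod M → ∃ i, Nonempty (M ≅ f i))

/-- An algebra `Λ` is τ-tilting-finite (with respect to right modules,
i.e. left `Λᵐᵒᵖ`-modules). -/
def IsTauTiltingFinite (Λ : Type) [Ring Λ] : Prop := IsTauTiltingFiniteRing Λᵐᵒᵖ

/-- An algebra `Λ` is representation-finite (with respect to right modules). -/
def IsRepFinite (Λ : Type) [Ring Λ] : Prop := IsRepFiniteRing Λᵐᵒᵖ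
/-! ### Quasitilted algebras. -/

/-- A witness that `Λ` is quasitilted: a hereditary abelian Hom-finite
`K`-category `H` together with a tilting object `T` whose endomorphism algebra
is `Λ`. -/
structure QuasitiltedWitness (K : Type) [Field K] (Λ : Type) [Ring Λ] [Algebra K Λ] where
  /-- the hereditary abelian category -/
  H : Type u
  [cat : Category.{v} H]
  [ab : Abelian H]
  [lin : Linear K H]
  /-- `H` is Hom-finite over `K` -/
  homFinite : ∀ X Y : H, FiniteDimensional K (X ⟶ Y)
  /-- `H` is hereditary: `Ext¹(Z, -)` is right exact, i.e. every short exact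
  sequence ending at `Z` lifts along an epimorphism `X ↠ Y` of first terms. -/
  hereditary : ∀ (X Y Z E : H) (g : X ⟶ Y) (i : Y ⟶ E) (p : E ⟶ Z) (w : i ≫ p = 0),
    Epi g → (ShortComplex.mk i p w).ShortExact →
    ∃ (E' : H) (i' : X ⟶ E') (p' : E' ⟶ Z) (w' : i' ≫ p' = 0) (φ : E' ⟶ E),
      (ShortComplex.mk i' p' w').ShortExact ∧ i' ≫ φ = g ≫ i ∧ φ ≫ p = p'
  /-- the tilting object -/
  T : H
  /-- `Ext¹(T, T) = 0`: every self-extension of `T` splits -/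
  selfExtVanish : ∀ (E : H) (i : T ⟶ E) (p : E ⟶ T) (w : i ≫ p = 0),
    (ShortComplex.mk i p w).ShortExact → ∃ s : T ⟶ E, s ≫ p = 𝟙 T
  /-- `T` generates: `Hom(T, X) = 0 = Ext¹(T, X)` forces `X = 0` -/
  generates : ∀ X : H, (∀ f : T ⟶ X, f = 0) →
    (∀ (E : H) (i : X ⟶ E) (p : E ⟶ T) (w : i ≫ p = 0),
       (ShortComplex.mk i p w).ShortExact → ∃ s : T ⟶ E, s ≫ p = 𝟙 T) →
    IsZero X
  /-- `Λ` is the endomorphism algebra of `T` as a `K`-algebra -/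
  endIso : ∃ φ : End T ≃+* Λ, ∀ k : K, φ (k • 𝟙 T) = algebraMap K Λ k

/-- `Λ` is a quasitilted algebra. -/
def IsQuasitilted (K : Type) [Field K] (Λ : Type) [Ring Λ] [Algebra K Λ] : Prop :=
  Nonempty (QuasitiltedWitness.{u, v} K Λ)

/-!
If `Λ` is τ-tilting finite, then τ-rigid modules `U` give only finitely many classes `Gen U`, since
`Gen U` is determined by the co-Bongartz completion of `U`, a support τ-tilting module. Following
Demonet–Iyama–Jasso, every brick `B` is then determined by a τ-rigid module `X` which generates it
and lies in the torsion class of `B`, so there are finitely many bricks. If moreover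
`Ext²(B, B) = 0`, then `Ext¹(B, B) = 0`: otherwise iterated self-extensions produce quotients of
`X` filtered by ever more copies of `B`.

A tilting object `T` with endomorphism ring `Λ` in a hereditary category splits every `Λ`-module
into a torsion and a torsion-free part, the torsion-free modules being the `Hom(T, X)` with
`Ext¹(T, X) = 0`. These have projective dimension at most one, and they contain the syzygies of all
modules, so `Ext²(M, M) = 0` for every indecomposable `M`. An indecomposable `M` which is not a
brick has an endomorphism `φ ≠ 0` with `φ ∘ φ = 0`. Choose one with minimal image if `M` is
torsion-free, with maximal kernel if `M` is torsion. By induction a suitable summand of `M / im φ`,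
respectively `ker φ`, is a brick, and its rigidity makes it a summand of `M`, a contradiction. So
all indecomposables are bricks.
-/

/-! ### Artin algebras -/

/-- `R` is an Artin algebra: it is module-finite over a commutative Artinian ring. Only the
existence of the base ring is recorded, so that it can be chosen afresh in each argument. -/
class IsArtinAlgebra (R : Type) [Ring R] : Prop where
  exists_base : ∃ (k : Type) (_ : CommRing k) (_ : Algebra k R),
    IsArtinianRing k ∧ Module.Finite k R

section ArtinAlgebra

theorem IsArtinAlgebra.of_finite (k : Type) [CommRing k] [IsArtinianRing k] [Algebra k R]
    [Module.Finite k R] : IsArtinAlgebra R :=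
  ⟨k, inferInstance, inferInstance, inferInstance, inferInstance⟩

instance IsArtinAlgebra.isArtinianRing [IsArtinAlgebra R] : IsArtinianRing R := by
  obtain ⟨k, _, _, _, _⟩ := IsArtinAlgebra.exists_base (R := R)
  exact .of_finite k R

theorem finite_linearMap_of_isNoetherianRing (k : Type*) [CommRing k] [IsNoetherianRing k]
    [Algebra k R] [Module.Finite k R] (M N : Type*) [AddCommGroup M] [Module R M]
    [AddCommGroup N] [Module R N] [Module k N] [IsScalarTower k R N] [Module.Finite R M]
    [Module.Finite R N] :
    Module.Finite k (M →ₗ[R] N) := by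
  have : Module.Finite k N := .trans R N
  obtain ⟨n, q, hq⟩ := Module.Finite.exists_fin' R M
  let evalAtGenerators : (M →ₗ[R] N) →ₗ[k] (Fin n → N) :=
    { toFun := fun t i => t (q (Pi.single i 1))
      map_add' := fun _ _ => rfl
      map_smul' := fun _ _ => rfl }
  refine Module.Finite.of_injective evalAtGenerators fun s t hst => ?_
  refine (LinearMap.cancel_right hq).1 (LinearMap.pi_ext' fun i => LinearMap.ext_ring ?_)
  exact congrFun hst i

variable [IsArtinAlgebra R] (M : Type*) [AddCommGroup M] [Module R M] [Module.Finite R M]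

instance isArtinianRing_moduleEnd : IsArtinianRing (Module.End R M) := by
  obtain ⟨k, _, _, _, _⟩ := IsArtinAlgebra.exists_base (R := R)
  let _ : Module k M := Module.compHom M (algebraMap k R)
  have : IsScalarTower k R M := .of_algebraMap_smul fun _ _ => rfl
  have : Module.Finite k (Module.End R M) := finite_linearMap_of_isNoetherianRing k M M
  exact .of_finite k _

end ArtinAlgebra

/-! ### Extending, lifting and vanishing of homomorphisms -/

section Factorization

variable {P₁ P₀ U Z W E N : Type*} [AddCommGroup P₁] [Module R P₁] [AddCommGroup P₀] [Module R P₀]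
  [AddCommGroup U] [Module R U] [AddCommGroup Z] [Module R Z] [AddCommGroup W] [Module R W]
  [AddCommGroup E] [Module R E] [AddCommGroup N] [Module R N]

/-- Every homomorphism from the source of `f` to `Z` extends along `f`, i.e. `Hom(f, Z)` is
surjective. -/
def ExtendsAlong (f : P₁ →ₗ[R] P₀) (Z : Type*) [AddCommGroup Z] [Module R Z] : Prop :=
  ∀ t : P₁ →ₗ[R] Z, ∃ k : P₀ →ₗ[R] Z, k ∘ₗ f = t

/-- Every homomorphism from `U` to the target of `p` lifts along `p`, i.e. `Hom(U, p)` is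
surjective. -/
def LiftsAlong (p : E →ₗ[R] Z) (U : Type*) [AddCommGroup U] [Module R U] : Prop :=
  ∀ t : U →ₗ[R] Z, ∃ s : U →ₗ[R] E, p ∘ₗ s = t

/-- `Hom(U, Z) = 0`. -/
def HomVanishes (R : Type) [Ring R] (U Z : Type*) [AddCommGroup U] [Module R U] [AddCommGroup Z]
    [Module R Z] : Prop :=
  ∀ t : U →ₗ[R] Z, t = 0

theorem exists_comp_eq_of_exact {f : P₁ →ₗ[R] P₀} {g : P₀ →ₗ[R] U} (hfg : Function.Exact f g)
    (hg : Function.Surjective g) (k : P₀ →ₗ[R] Z) (hk : k ∘ₗ f = 0) :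
    ∃ s : U →ₗ[R] Z, s ∘ₗ g = k := by
  refine ⟨(LinearMap.range f).liftQ k (LinearMap.range_le_ker_iff.2 hk) ∘ₗ
    (hfg.linearEquivOfSurjective hg).symm, LinearMap.ext fun x => ?_⟩
  have hx : (hfg.linearEquivOfSurjective hg).symm (g x) = Submodule.Quotient.mk x :=
    (LinearEquiv.symm_apply_eq _).2 rfl
  simp [hx]

theorem exists_comp_eq_of_ker_le {g : P₀ →ₗ[R] U} (hg : Function.Surjective g)
    (k : P₀ →ₗ[R] Z) (hk : LinearMap.ker g ≤ LinearMap.ker k) :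
    ∃ s : U →ₗ[R] Z, s ∘ₗ g = k :=
  exists_comp_eq_of_exact g.exact_subtype_ker_map hg k (LinearMap.ext fun x => hk x.2)

theorem exists_lift_of_exact [Module.Projective R U] {f : P₁ →ₗ[R] P₀} {g : P₀ →ₗ[R] Z}
    (hfg : Function.Exact f g) (t : U →ₗ[R] P₀) (ht : g ∘ₗ t = 0) :
    ∃ s : U →ₗ[R] P₁, f ∘ₗ s = t := by
  obtain ⟨s, hs⟩ := Module.projective_lifting_property f.rangeRestrict
    (t.codRestrict (LinearMap.range f) fun x => (hfg _).1 (LinearMap.congr_fun ht x))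
    f.surjective_rangeRestrict
  exact ⟨s, LinearMap.ext fun x => congrArg Subtype.val (LinearMap.congr_fun hs x)⟩

theorem HomVanishes.of_injective (h : HomVanishes R U Z) {j : W →ₗ[R] Z}
    (hj : Function.Injective j) : HomVanishes R U W := fun t =>
  (LinearMap.cancel_left hj).1 (by rw [h (j ∘ₗ t), LinearMap.comp_zero])

theorem HomVanishes.of_surjective (h : HomVanishes R U Z) {q : U →ₗ[R] W}
    (hq : Function.Surjective q) : HomVanishes R W Z := fun t =>
  (LinearMap.cancel_right hq).1 (by rw [h (t ∘ₗ q), LinearMap.zero_comp])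

theorem HomVanishes.pi_right (h : HomVanishes R U Z) (ι : Type*) :
    HomVanishes R U (ι → Z) := fun t =>
  LinearMap.ext fun x => funext fun i => LinearMap.congr_fun (h (LinearMap.proj i ∘ₗ t)) x

theorem HomVanishes.pi_left (h : HomVanishes R U Z) (ι : Type*) [Finite ι] :
    HomVanishes R (ι → U) Z := by
  classical
  exact fun _ => LinearMap.pi_ext' fun _ => h _

theorem HomVanishes.prod_left (h : HomVanishes R U Z) (h' : HomVanishes R W Z) :
    HomVanishes R (U × W) Z := fun _ =>
  LinearMap.prod_ext (h _) (h' _)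

theorem ExtendsAlong.of_surjective {f : P₁ →ₗ[R] P₀} [Module.Projective R P₁]
    (h : ExtendsAlong f Z) {q : Z →ₗ[R] W} (hq : Function.Surjective q) : ExtendsAlong f W := by
  intro t
  obtain ⟨t', rfl⟩ := Module.projective_lifting_property q t hq
  obtain ⟨k, rfl⟩ := h t'
  exact ⟨q ∘ₗ k, rfl⟩

theorem ExtendsAlong.pi {f : P₁ →ₗ[R] P₀} (h : ExtendsAlong f Z) (ι : Type*) :
    ExtendsAlong f (ι → Z) := by
  intro t
  choose k hk using fun i => h (LinearMap.proj i ∘ₗ t)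
  exact ⟨LinearMap.pi k, LinearMap.ext fun x => funext fun i => LinearMap.congr_fun (hk i) x⟩

theorem ExtendsAlong.compLeft {f : P₁ →ₗ[R] P₀} (h : ExtendsAlong f Z) (ι : Type*) [Finite ι] :
    ExtendsAlong (f.compLeft ι) Z := by
  classical
  have := Fintype.ofFinite ι
  intro t
  choose s hs using fun i => h (t ∘ₗ LinearMap.single R (fun _ : ι => P₁) i)
  refine ⟨LinearMap.lsum R _ ℕ s, LinearMap.pi_ext' fun i => ?_⟩
  rw [← hs i]
  ext x
  simp [Pi.single_apply, apply_ite]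

theorem ExtendsAlong.prodMap {Q₁ Q₀ : Type*} [AddCommGroup Q₁] [Module R Q₁] [AddCommGroup Q₀]
    [Module R Q₀] {f : P₁ →ₗ[R] P₀} {f' : Q₁ →ₗ[R] Q₀} (h : ExtendsAlong f Z)
    (h' : ExtendsAlong f' Z) : ExtendsAlong (f.prodMap f') Z := by
  intro t
  obtain ⟨k, hk⟩ := h (t ∘ₗ LinearMap.inl R _ _)
  obtain ⟨k', hk'⟩ := h' (t ∘ₗ LinearMap.inr R _ _)
  refine ⟨k.coprod k', LinearMap.prod_ext ?_ ?_⟩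
  · rw [← hk]; ext; simp
  · rw [← hk']; ext; simp

theorem ExtendsAlong.of_prodMap_right {Q₁ Q₀ : Type*} [AddCommGroup Q₁] [Module R Q₁]
    [AddCommGroup Q₀] [Module R Q₀] {f : P₁ →ₗ[R] P₀} {f' : Q₁ →ₗ[R] Q₀}
    (h : ExtendsAlong (f.prodMap f') Z) : ExtendsAlong f' Z := by
  intro t
  obtain ⟨k, hk⟩ := h (t ∘ₗ LinearMap.snd R _ _)
  refine ⟨k ∘ₗ LinearMap.inr R _ _, LinearMap.ext fun x => ?_⟩
  simpa using LinearMap.congr_fun hk (0, x)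

theorem ExtendsAlong.ker {f : P₁ →ₗ[R] P₀} {g : P₀ →ₗ[R] U} (hfg : Function.Exact f g)
    (hg : Function.Surjective g) (hE : ExtendsAlong f E) {p : E →ₗ[R] N} (hp : LiftsAlong p U) :
    ExtendsAlong f (LinearMap.ker p) := by
  intro t
  obtain ⟨k, hk⟩ := hE ((LinearMap.ker p).subtype ∘ₗ t)
  obtain ⟨s, hs⟩ := exists_comp_eq_of_exact hfg hg (p ∘ₗ k) (by
    rw [LinearMap.comp_assoc, hk]; ext x; simp)
  obtain ⟨c, rfl⟩ := hp s
  refine ⟨(k - c ∘ₗ g).codRestrict (LinearMap.ker p) fun x => ?_, LinearMap.ext fun x => ?_⟩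
  · simpa [sub_eq_zero] using (LinearMap.congr_fun hs x).symm
  · simpa [Subtype.ext_iff, hfg.apply_apply_eq_zero] using LinearMap.congr_fun hk x

theorem liftsAlong_of_extendsAlong_ker [Module.Projective R P₀] {f : P₁ →ₗ[R] P₀}
    {g : P₀ →ₗ[R] U} (hfg : Function.Exact f g) (hg : Function.Surjective g) {p : E →ₗ[R] Z}
    (hp : Function.Surjective p) (hker : ExtendsAlong f (LinearMap.ker p)) : LiftsAlong p U := by
  intro t
  obtain ⟨k, hk⟩ := Module.projective_lifting_property p (t ∘ₗ g) hp
  obtain ⟨k', hk'⟩ := hker ((k ∘ₗ f).codRestrict (LinearMap.ker p) fun x => by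
    simpa [hfg.apply_apply_eq_zero] using LinearMap.congr_fun hk (f x))
  obtain ⟨s, hs⟩ := exists_comp_eq_of_exact hfg hg (k - (LinearMap.ker p).subtype ∘ₗ k') (by
    rw [LinearMap.sub_comp, LinearMap.comp_assoc, hk', LinearMap.subtype_comp_codRestrict,
      sub_self])
  refine ⟨s, (LinearMap.cancel_right hg).1 ?_⟩
  rw [LinearMap.comp_assoc, hs, LinearMap.comp_sub, hk]
  ext x
  simp

end Factorization

section Approximation

variable [IsArtinAlgebra R] (M N : Type*) [AddCommGroup M] [Module R M] [AddCommGroup N]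
  [Module R N] [Module.Finite R M] [Module.Finite R N]

theorem exists_hom_generators : ∃ (n : ℕ) (h : Fin n → M →ₗ[R] N), ∀ t : M →ₗ[R] N,
    (∃ a : Fin n → Module.End R M, t = ∑ i, h i ∘ₗ a i) ∧
      ∃ b : Fin n → Module.End R N, t = ∑ i, b i ∘ₗ h i := by
  obtain ⟨k, _, _, _, _⟩ := IsArtinAlgebra.exists_base (R := R)
  let _ : Module k M := Module.compHom M (algebraMap k R)
  let _ : Module k N := Module.compHom N (algebraMap k R)
  have : IsScalarTower k R M := .of_algebraMap_smul fun _ _ => rfl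
  have : IsScalarTower k R N := .of_algebraMap_smul fun _ _ => rfl
  have := finite_linearMap_of_isNoetherianRing (R := R) k M N
  obtain ⟨n, h, hspan⟩ := Module.Finite.exists_fin (R := k) (M := M →ₗ[R] N)
  refine ⟨n, h, fun t => ?_⟩
  obtain ⟨c, rfl⟩ := (Submodule.mem_span_range_iff_exists_fun k).1
    (hspan ▸ Submodule.mem_top (x := t))
  exact ⟨⟨fun i => algebraMap k _ (c i), by ext x; simp⟩,
    ⟨fun i => algebraMap k _ (c i), by ext x; simp⟩⟩

theorem exists_liftsAlong_pi : ∃ (n : ℕ) (p : (Fin n → M) →ₗ[R] N), LiftsAlong p M := by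
  obtain ⟨n, h, hgen⟩ := exists_hom_generators (R := R) M N
  refine ⟨n, LinearMap.lsum R _ ℕ h, fun t => ?_⟩
  obtain ⟨a, rfl⟩ := (hgen t).1
  exact ⟨LinearMap.pi a, by ext x; simp⟩

theorem exists_extendsAlong_pi : ∃ (n : ℕ) (p : N →ₗ[R] (Fin n → M)), ExtendsAlong p M := by
  obtain ⟨n, h, hgen⟩ := exists_hom_generators (R := R) N M
  refine ⟨n, LinearMap.pi h, fun t => ?_⟩
  obtain ⟨b, rfl⟩ := (hgen t).2
  exact ⟨LinearMap.lsum R _ ℕ b, by ext x; simp⟩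

end Approximation

/-! ### Generation, additive closure and traces -/

/-- `Z` is a quotient of a finite power of `U`. -/
def Generates (R : Type) [Ring R] (U Z : Type*) [AddCommGroup U] [Module R U] [AddCommGroup Z]
    [Module R Z] : Prop :=
  ∃ (ι : Type) (_ : Finite ι) (p : (ι → U) →ₗ[R] Z), Function.Surjective p

/-- `N ∈ add M`: the module `N` is a direct summand of a finite power of `M`. -/
def MemAdd (R : Type) [Ring R] (N M : Type*) [AddCommGroup N] [Module R N] [AddCommGroup M]
    [Module R M] : Prop :=
  ∃ (ι : Type) (_ : Finite ι) (i : N →ₗ[R] (ι → M)) (r : (ι → M) →ₗ[R] N), r ∘ₗ i = LinearMap.id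

/-- The trace of `U` in `Z`: the sum of the images of all homomorphisms from `U` to `Z`. -/
def traceSubmodule (R : Type) [Ring R] (U Z : Type*) [AddCommGroup U] [Module R U]
    [AddCommGroup Z] [Module R Z] : Submodule R Z :=
  ⨆ t : U →ₗ[R] Z, LinearMap.range t

section Generation

variable {P₁ P₀ U V Z W E : Type*} [AddCommGroup P₁] [Module R P₁] [AddCommGroup P₀]
  [Module R P₀] [AddCommGroup U] [Module R U] [AddCommGroup V] [Module R V]
  [AddCommGroup Z] [Module R Z] [AddCommGroup W] [Module R W] [AddCommGroup E] [Module R E]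

theorem Generates.of_surjective (h : Generates R U Z) {q : Z →ₗ[R] W}
    (hq : Function.Surjective q) : Generates R U W := by
  obtain ⟨ι, _, p, hp⟩ := h
  exact ⟨ι, inferInstance, q ∘ₗ p, hq.comp hp⟩

theorem Generates.refl : Generates R U U :=
  ⟨Unit, inferInstance, LinearMap.proj (), fun x => ⟨fun _ => x, rfl⟩⟩

theorem Generates.pi (h : Generates R U Z) (κ : Type) [Finite κ] : Generates R U (κ → Z) := by
  obtain ⟨ι, _, p, hp⟩ := h
  refine ⟨κ × ι, inferInstance,
    LinearMap.pi fun i => p ∘ₗ LinearMap.pi fun j => LinearMap.proj (i, j), fun z => ?_⟩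
  choose y hy using fun i => hp (z i)
  exact ⟨fun ij => y ij.1 ij.2, funext hy⟩

theorem Generates.trans (h : Generates R U Z) (h' : Generates R Z W) : Generates R U W := by
  obtain ⟨κ, _, p, hp⟩ := h'
  exact (h.pi κ).of_surjective hp

theorem Generates.prod (h : Generates R U Z) (h' : Generates R U W) : Generates R U (Z × W) := by
  obtain ⟨ι, _, p, hp⟩ := h
  obtain ⟨κ, _, p', hp'⟩ := h'
  refine ⟨ι ⊕ κ, inferInstance, (p ∘ₗ LinearMap.funLeft R U Sum.inl).prod
    (p' ∘ₗ LinearMap.funLeft R U Sum.inr), ?_⟩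
  rintro ⟨z, w⟩
  obtain ⟨y, rfl⟩ := hp z
  obtain ⟨y', rfl⟩ := hp' w
  exact ⟨Sum.elim y y', rfl⟩

theorem Generates.finite (h : Generates R U Z) [Module.Finite R U] : Module.Finite R Z := by
  obtain ⟨_, _, p, hp⟩ := h
  exact .of_surjective p hp

theorem Generates.homVanishes (h : Generates R U Z) (h0 : HomVanishes R U W) :
    HomVanishes R Z W := by
  obtain ⟨ι, _, p, hp⟩ := h
  exact (h0.pi_left ι).of_surjective hp

theorem ExtendsAlong.of_generates [Module.Projective R P₁] {f : P₁ →ₗ[R] P₀}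
    (h : ExtendsAlong f U) (hUZ : Generates R U Z) : ExtendsAlong f Z := by
  obtain ⟨ι, _, p, hp⟩ := hUZ
  exact (h.pi ι).of_surjective hp

theorem MemAdd.generates (h : MemAdd R Z U) : Generates R U Z := by
  obtain ⟨ι, _, i, r, hri⟩ := h
  exact ⟨ι, inferInstance, r, fun x => ⟨i x, LinearMap.congr_fun hri x⟩⟩

theorem MemAdd.refl : MemAdd R U U :=
  ⟨Unit, inferInstance, LinearMap.pi fun _ => LinearMap.id, LinearMap.proj (), rfl⟩

theorem MemAdd.of_retract (h : MemAdd R Z U) {i : W →ₗ[R] Z} {q : Z →ₗ[R] W}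
    (hq : q ∘ₗ i = LinearMap.id) : MemAdd R W U := by
  obtain ⟨ι, _, j, r, hr⟩ := h
  refine ⟨ι, inferInstance, j ∘ₗ i, q ∘ₗ r, ?_⟩
  rw [LinearMap.comp_assoc, ← LinearMap.comp_assoc i, hr, LinearMap.id_comp, hq]

theorem MemAdd.pi (h : MemAdd R Z U) (κ : Type) [Finite κ] : MemAdd R (κ → Z) U := by
  obtain ⟨ι, _, i, r, hri⟩ := h
  refine ⟨κ × ι, inferInstance,
    LinearMap.pi fun ij => LinearMap.proj ij.2 ∘ₗ i ∘ₗ LinearMap.proj ij.1,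
    LinearMap.pi fun a => r ∘ₗ LinearMap.pi fun b => LinearMap.proj (a, b), ?_⟩
  exact LinearMap.ext fun x => funext fun a => LinearMap.congr_fun hri (x a)

theorem MemAdd.trans (h : MemAdd R W Z) (h' : MemAdd R Z U) : MemAdd R W U := by
  obtain ⟨κ, _, i, r, hri⟩ := h
  exact (h'.pi κ).of_retract hri

theorem MemAdd.homVanishes (h : MemAdd R W Z) (h0 : HomVanishes R U Z) : HomVanishes R U W := by
  obtain ⟨ι, _, i, r, hri⟩ := h
  exact (h0.pi_right ι).of_injective (LinearMap.injective_of_comp_eq_id i r hri)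

theorem MemAdd.prod (h : MemAdd R Z U) (h' : MemAdd R W U) : MemAdd R (Z × W) U := by
  obtain ⟨ι, _, i, r, hri⟩ := h
  obtain ⟨κ, _, i', r', hri'⟩ := h'
  refine ⟨ι ⊕ κ, inferInstance,
    LinearMap.pi fun a => Sum.casesOn a (fun a => LinearMap.proj a ∘ₗ i ∘ₗ LinearMap.fst R _ _)
      fun a => LinearMap.proj a ∘ₗ i' ∘ₗ LinearMap.snd R _ _,
    (r ∘ₗ LinearMap.funLeft R U Sum.inl).prod (r' ∘ₗ LinearMap.funLeft R U Sum.inr), ?_⟩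
  exact LinearMap.ext fun x =>
    Prod.ext (LinearMap.congr_fun hri x.1) (LinearMap.congr_fun hri' x.2)

theorem MemAdd.of_equiv (e : Z ≃ₗ[R] U) : MemAdd R Z U :=
  MemAdd.refl.of_retract (i := e.toLinearMap) (q := e.symm.toLinearMap) (by simp)

theorem range_le_traceSubmodule (t : U →ₗ[R] Z) : LinearMap.range t ≤ traceSubmodule R U Z :=
  le_iSup (fun t : U →ₗ[R] Z => LinearMap.range t) t

theorem map_traceSubmodule_le (φ : Z →ₗ[R] W) :
    (traceSubmodule R U Z).map φ ≤ traceSubmodule R U W := by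
  rw [traceSubmodule, Submodule.map_iSup]
  refine iSup_le fun t => ?_
  rw [← LinearMap.range_comp]
  exact range_le_traceSubmodule _

theorem traceSubmodule_le_of_surjective {q : V →ₗ[R] U} (hq : Function.Surjective q) :
    traceSubmodule R U Z ≤ traceSubmodule R V Z := by
  refine iSup_le fun t => ?_
  rw [← LinearMap.range_comp_of_range_eq_top t (LinearMap.range_eq_top.2 hq)]
  exact range_le_traceSubmodule _

theorem LiftsAlong.traceSubmodule_le_range {p : E →ₗ[R] Z} (h : LiftsAlong p U) :
    traceSubmodule R U Z ≤ LinearMap.range p := by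
  refine iSup_le fun t => ?_
  obtain ⟨s, rfl⟩ := h t
  exact LinearMap.range_comp_le_range s p

theorem range_pi_le_traceSubmodule {ι : Type*} [Finite ι] (p : (ι → U) →ₗ[R] Z) :
    LinearMap.range p ≤ traceSubmodule R U Z := by
  classical
  rw [LinearMap.range_eq_map, ← LinearMap.iSup_range_single, Submodule.map_iSup]
  refine iSup_le fun i => ?_
  rw [← LinearMap.range_comp]
  exact range_le_traceSubmodule _

theorem Generates.traceSubmodule_eq_top (h : Generates R U Z) : traceSubmodule R U Z = ⊤ := by
  obtain ⟨ι, _, p, hp⟩ := h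
  exact top_le_iff.1 (LinearMap.range_eq_top.2 hp ▸ range_pi_le_traceSubmodule p)

theorem LiftsAlong.surjective_of_traceSubmodule_eq_top {p : E →ₗ[R] Z} (h : LiftsAlong p U)
    (htop : traceSubmodule R U Z = ⊤) : Function.Surjective p :=
  LinearMap.range_eq_top.1 (top_le_iff.1 (htop ▸ h.traceSubmodule_le_range))

theorem generates_traceSubmodule (R : Type) [Ring R] [IsArtinAlgebra R] (U Z : Type*)
    [AddCommGroup U] [Module R U] [AddCommGroup Z] [Module R Z] [Module.Finite R U]
    [Module.Finite R Z] : Generates R U (traceSubmodule R U Z) := by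
  obtain ⟨n, p, hp⟩ := exists_liftsAlong_pi (R := R) U Z
  rw [le_antisymm hp.traceSubmodule_le_range (range_pi_le_traceSubmodule p)]
  exact ⟨Fin n, inferInstance, p.rangeRestrict, p.surjective_rangeRestrict⟩

theorem generates_of_traceSubmodule_eq_top [IsArtinAlgebra R] [Module.Finite R U]
    [Module.Finite R Z] (h : traceSubmodule R U Z = ⊤) : Generates R U Z :=
  (generates_traceSubmodule R U Z).of_surjective (q := (traceSubmodule R U Z).subtype)
    (LinearMap.range_eq_top.1 (by rw [Submodule.range_subtype, h]))

theorem generates_of_homVanishes_quotient [IsArtinAlgebra R] [Module.Finite R U]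
    [Module.Finite R Z] (h : HomVanishes R Z (Z ⧸ traceSubmodule R U Z)) : Generates R U Z :=
  generates_of_traceSubmodule_eq_top (by
    rw [← (traceSubmodule R U Z).ker_mkQ, h (traceSubmodule R U Z).mkQ, LinearMap.ker_zero])

theorem traceSubmodule_eq_top_of_projective [Module.Projective R Z]
    (h : ∀ t : Z →ₗ[R] R, LinearMap.range t ≤ traceSubmodule R U R) :
    traceSubmodule R U Z = ⊤ := by
  obtain ⟨s, hs⟩ := Module.projective_def'.1 (inferInstance : Module.Projective R Z)
  refine eq_top_iff.2 fun x _ => ?_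
  rw [← LinearMap.id_apply (R := R) x, ← hs, LinearMap.comp_apply,
    Finsupp.linearCombination_apply]
  refine Submodule.sum_mem _ fun z _ => ?_
  exact map_traceSubmodule_le (LinearMap.toSpanSingleton R Z z)
    ⟨s x z, h (Finsupp.lapply z ∘ₗ s) ⟨x, rfl⟩, rfl⟩

end Generation

/-! ### τ-rigid modules -/

section TauRigid

variable {P₁ P₀ Q₁ Q₀ M N : Type*} [AddCommGroup P₁] [Module R P₁] [AddCommGroup P₀]
  [Module R P₀] [AddCommGroup Q₁] [Module R Q₁] [AddCommGroup Q₀] [Module R Q₀]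
  [AddCommGroup M] [Module R M] [AddCommGroup N] [Module R N]

/-- `P₁ → P₀ → M → 0` is a presentation of `M` by finitely generated projective modules. -/
structure IsProjPresentation (f : P₁ →ₗ[R] P₀) (g : P₀ →ₗ[R] M) : Prop where
  finite_left : Module.Finite R P₁
  finite_right : Module.Finite R P₀
  projective_left : Module.Projective R P₁
  projective_right : Module.Projective R P₀
  surjective : Function.Surjective g
  exact : Function.Exact f g

/-- `M` is τ-rigid: it has a projective presentation `f` with `Hom(f, M)` surjective. -/
def IsTauRigid (R : Type) [Ring R] (M : Type*) [AddCommGroup M] [Module R M] : Prop :=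
  ∃ (P₁ P₀ : ModuleCat.{0} R) (f : P₁ →ₗ[R] P₀) (g : P₀ →ₗ[R] M),
    IsProjPresentation f g ∧ ExtendsAlong f M

theorem projective_pi (ι : Type*) [Finite ι] [Module.Projective R M] :
    Module.Projective R (ι → M) := by
  classical
  have := Fintype.ofFinite ι
  exact .of_equiv (DFinsupp.linearEquivFunOnFintype (R := R) (ι := ι) (M := fun _ => M))

theorem IsProjPresentation.pi {f : P₁ →ₗ[R] P₀} {g : P₀ →ₗ[R] M} (h : IsProjPresentation f g)
    (ι : Type*) [Finite ι] : IsProjPresentation (f.compLeft ι) (g.compLeft ι) := by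
  obtain ⟨_, _, _, _, hg, hfg⟩ := h
  refine ⟨inferInstance, inferInstance, projective_pi ι, projective_pi ι, hg.comp_left,
    fun y => ⟨fun hy => ?_, ?_⟩⟩
  · choose x hx using fun i => (hfg (y i)).1 (congrFun hy i)
    exact ⟨x, funext hx⟩
  · rintro ⟨x, rfl⟩
    exact funext fun i => hfg.apply_apply_eq_zero (x i)

theorem IsProjPresentation.prodMap {f : P₁ →ₗ[R] P₀} {g : P₀ →ₗ[R] M}
    (h : IsProjPresentation f g) {f' : Q₁ →ₗ[R] Q₀} {g' : Q₀ →ₗ[R] N}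
    (h' : IsProjPresentation f' g') : IsProjPresentation (f.prodMap f') (g.prodMap g') := by
  obtain ⟨_, _, _, _, hg, hfg⟩ := h
  obtain ⟨_, _, _, _, hg', hfg'⟩ := h'
  refine ⟨inferInstance, inferInstance, inferInstance, inferInstance, hg.prodMap hg', ?_⟩
  rintro ⟨x, y⟩
  simp [Prod.ext_iff, hfg x, hfg' y]

theorem IsProjPresentation.exists_lift {f : P₁ →ₗ[R] P₀} {g : P₀ →ₗ[R] M}
    (h : IsProjPresentation f g) {f' : Q₁ →ₗ[R] Q₀} {g' : Q₀ →ₗ[R] N}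
    (h' : IsProjPresentation f' g') (t : M →ₗ[R] N) :
    ∃ (t₁ : P₁ →ₗ[R] Q₁) (t₀ : P₀ →ₗ[R] Q₀), g' ∘ₗ t₀ = t ∘ₗ g ∧ t₀ ∘ₗ f = f' ∘ₗ t₁ := by
  have := h.projective_left
  have := h.projective_right
  obtain ⟨t₀, ht₀⟩ := Module.projective_lifting_property g' (t ∘ₗ g) h'.surjective
  obtain ⟨t₁, ht₁⟩ := exists_lift_of_exact h'.exact (t₀ ∘ₗ f) (by
    rw [← LinearMap.comp_assoc, ht₀, LinearMap.comp_assoc, h.exact.linearMap_comp_eq_zero,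
      LinearMap.comp_zero])
  exact ⟨t₁, t₀, ht₀, ht₁.symm⟩

theorem IsTauRigid.homVanishes_quotient_traceSubmodule [IsArtinAlgebra R] [Module.Finite R M]
    [Module.Finite R N] (hM : IsTauRigid R M) :
    HomVanishes R M (N ⧸ traceSubmodule R M N) := by
  obtain ⟨P₁, P₀, f, g, h, hf⟩ := hM
  have := h.projective_left
  have := h.projective_right
  intro t
  obtain ⟨s, rfl⟩ := liftsAlong_of_extendsAlong_ker h.exact h.surjective
    (traceSubmodule R M N).mkQ_surjective
    (by rw [Submodule.ker_mkQ]; exact hf.of_generates (generates_traceSubmodule R M N)) t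
  exact LinearMap.range_le_ker_iff.1 (by
    rw [Submodule.ker_mkQ]; exact range_le_traceSubmodule s)

end TauRigid

section Fitting

variable {M : Type*} [AddCommGroup M] [Module R M]

theorem exists_apply_apply_eq_of_isCompl {a : M →ₗ[R] M}
    (h : IsCompl (LinearMap.ker a) (LinearMap.range a)) (x : M) : ∃ y, a (a y) = a x := by
  obtain ⟨z, hz, _, ⟨y, rfl⟩, rfl⟩ :=
    Submodule.mem_sup.1 (h.sup_eq_top ▸ Submodule.mem_top (x := x))
  exact ⟨y, by rw [map_add, LinearMap.mem_ker.1 hz, zero_add]⟩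

theorem projective_of_isCompl [Module.Projective R M] {A B : Submodule R M} (h : IsCompl A B) :
    Module.Projective R A :=
  .of_split A.subtype (A.projectionOnto B h)
    (LinearMap.ext fun x => Submodule.projectionOnto_apply_left h x)

end Fitting

section Presentations

variable {P₁ P₀ Q₁ Q₀ M N Z : Type} [AddCommGroup P₁] [Module R P₁] [AddCommGroup P₀]
  [Module R P₀] [AddCommGroup Q₁] [Module R Q₁] [AddCommGroup Q₀] [Module R Q₀]
  [AddCommGroup M] [Module R M] [AddCommGroup N] [Module R N] [AddCommGroup Z] [Module R Z]

theorem IsProjPresentation.range_of_lift {f : P₁ →ₗ[R] P₀} {g : P₀ →ₗ[R] M}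
    (h : IsProjPresentation f g) {i : N →ₗ[R] M} {r : M →ₗ[R] N} (hri : r ∘ₗ i = LinearMap.id)
    {a₁ : P₁ →ₗ[R] P₁} {a₀ : P₀ →ₗ[R] P₀} (hga : g ∘ₗ a₀ = i ∘ₗ r ∘ₗ g)
    (hfa : a₀ ∘ₗ f = f ∘ₗ a₁) (h₁ : IsCompl (LinearMap.ker a₁) (LinearMap.range a₁))
    (h₀ : IsCompl (LinearMap.ker a₀) (LinearMap.range a₀))
    (hf : ∀ x ∈ LinearMap.range a₁, f x ∈ LinearMap.range a₀) :
    IsProjPresentation (f.restrict hf) (r ∘ₗ g ∘ₗ (LinearMap.range a₀).subtype) := by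
  obtain ⟨_, _, _, _, hg, hfg⟩ := h
  have hri' (y : N) : r (i y) = y := LinearMap.congr_fun hri y
  have hga' (x : P₀) : g (a₀ x) = i (r (g x)) := LinearMap.congr_fun hga x
  refine ⟨inferInstance, inferInstance, projective_of_isCompl h₁.symm,
    projective_of_isCompl h₀.symm, fun y => ?_, ?_⟩
  · obtain ⟨x, hx⟩ := hg (i y)
    exact ⟨⟨a₀ x, x, rfl⟩, by simp [hga', hri', hx]⟩
  · rintro ⟨_, x, rfl⟩
    refine ⟨fun hx => ?_, ?_⟩
    · obtain ⟨y, hy⟩ := exists_apply_apply_eq_of_isCompl h₀ x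
      have hzero : g (a₀ y) = 0 := by
        have : r (g (a₀ x)) = 0 := hx
        rw [← hy, hga', hri', hga', hri'] at this
        rw [hga', this, map_zero]
      obtain ⟨w, hw⟩ := (hfg _).1 hzero
      refine ⟨⟨a₁ w, w, rfl⟩, Subtype.ext ?_⟩
      change f (a₁ w) = a₀ x
      exact (LinearMap.congr_fun hfa w).symm.trans (by rw [LinearMap.comp_apply, hw, hy])
    · rintro ⟨w, hw⟩
      rw [← hw]
      simp [hfg.apply_apply_eq_zero]

theorem IsProjPresentation.exists_retract [IsArtinianRing R] {f : P₁ →ₗ[R] P₀} {g : P₀ →ₗ[R] M}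
    (h : IsProjPresentation f g) {i : N →ₗ[R] M} {r : M →ₗ[R] N} (hri : r ∘ₗ i = LinearMap.id) :
    ∃ (Q₁ Q₀ : ModuleCat.{0} R) (f' : Q₁ →ₗ[R] Q₀) (g' : Q₀ →ₗ[R] N), IsProjPresentation f' g' ∧
      ∀ (Z : Type) [AddCommGroup Z] [Module R Z], ExtendsAlong f Z → ExtendsAlong f' Z := by
  have := h.finite_left
  have := h.finite_right
  obtain ⟨a₁, a₀, hga, hfa⟩ := h.exists_lift h (i ∘ₗ r)
  obtain ⟨n, ⟨h₁, h₀⟩, hn⟩ := ((a₁.eventually_isCompl_ker_pow_range_pow.and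
    a₀.eventually_isCompl_ker_pow_range_pow).and (Filter.eventually_ge_atTop 1)).exists
  have hgan : g ∘ₗ (a₀ ^ n) = i ∘ₗ r ∘ₗ g := by
    clear h₁ h₀
    induction n, hn using Nat.le_induction with
    | base => rwa [pow_one]
    | succ n _ ih =>
      rw [pow_succ, Module.End.mul_eq_comp, ← LinearMap.comp_assoc, ih, LinearMap.comp_assoc,
        LinearMap.comp_assoc, hga, LinearMap.comp_assoc, ← LinearMap.comp_assoc _ i r, hri,
        LinearMap.id_comp]
  have hfan : (a₀ ^ n) ∘ₗ f = f ∘ₗ (a₁ ^ n) :=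
    Module.End.commute_pow_left_of_commute hfa n
  have hf : ∀ x ∈ LinearMap.range (a₁ ^ n), f x ∈ LinearMap.range (a₀ ^ n) := by
    rintro _ ⟨x, rfl⟩
    exact ⟨f x, LinearMap.congr_fun hfan x⟩
  refine ⟨ModuleCat.of R (LinearMap.range (a₁ ^ n)), ModuleCat.of R (LinearMap.range (a₀ ^ n)),
    f.restrict hf, _, h.range_of_lift hri hgan hfan h₁ h₀ hf, fun Z _ _ hZ t => ?_⟩
  obtain ⟨k, hk⟩ := hZ (t ∘ₗ Submodule.projectionOnto _ _ h₁.symm)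
  refine ⟨k ∘ₗ Submodule.subtype _, LinearMap.ext fun x => ?_⟩
  simpa [Submodule.projectionOnto_apply_left] using LinearMap.congr_fun hk x.1

theorem IsTauRigid.of_memAdd [IsArtinianRing R] (h : IsTauRigid R M) (hN : MemAdd R N M) :
    IsTauRigid R N := by
  obtain ⟨P₁, P₀, f, g, hfg, hf⟩ := h
  obtain ⟨ι, _, i, r, hri⟩ := id hN
  have := (hfg.pi ι).projective_left
  obtain ⟨Q₁, Q₀, f', g', hfg', hf'⟩ := (hfg.pi ι).exists_retract hri
  exact ⟨Q₁, Q₀, f', g', hfg', hf' N ((hf.compLeft ι).of_generates hN.generates)⟩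

theorem exists_comp_pow_eq_zero [IsArtinianRing R] [Module.Finite R P₁] [Module.Projective R P₁]
    {f : P₁ →ₗ[R] P₀} {d : P₁ →ₗ[R] P₁} (hfd : f ∘ₗ d = 0) (hf : ExtendsAlong f M)
    (hP : ∀ (P : Type) [AddCommGroup P] [Module R P] [Module.Finite R P] [Module.Projective R P],
      HomVanishes R P M → HomVanishes R P Z) :
    ∃ n : ℕ, ∀ q : P₁ →ₗ[R] Z, q ∘ₗ (d ^ n) = 0 := by
  obtain ⟨n, hn, hpos⟩ := (d.eventually_isCompl_ker_pow_range_pow.and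
    (Filter.eventually_ge_atTop 1)).exists
  have hfdn : f ∘ₗ (d ^ n) = 0 := by
    rw [← Nat.sub_add_cancel hpos, pow_succ', Module.End.mul_eq_comp, ← LinearMap.comp_assoc, hfd,
      LinearMap.zero_comp]
  have hM : HomVanishes R (LinearMap.range (d ^ n)) M := by
    intro t
    obtain ⟨k, hk⟩ := hf (t ∘ₗ (d ^ n).rangeRestrict)
    ext ⟨_, x, rfl⟩
    obtain ⟨y, hy⟩ := exists_apply_apply_eq_of_isCompl hn x
    have h0 : f ((d ^ n) y) = 0 := LinearMap.congr_fun hfdn y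
    have := LinearMap.congr_fun hk ((d ^ n) y)
    simp_rw [← hy]
    rw [LinearMap.comp_apply, h0, map_zero] at this
    exact this.symm
  have := projective_of_isCompl hn.symm
  exact ⟨n, fun q => LinearMap.ext fun x =>
    LinearMap.congr_fun (hP _ hM (q ∘ₗ Submodule.subtype _)) ⟨_, x, rfl⟩⟩

/-- A presentation differs from the one obtained by restricting a presentation of a module
containing `M` as a summand only by a complex `P → 0` with `Hom(P, M) = 0`. -/
theorem ExtendsAlong.of_retract [IsArtinianRing R] {f : P₁ →ₗ[R] P₀} {g : P₀ →ₗ[R] M}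
    (h : IsProjPresentation f g) (hf : ExtendsAlong f M) {f' : Q₁ →ₗ[R] Q₀} {g' : Q₀ →ₗ[R] N}
    (h' : IsProjPresentation f' g') {i : M →ₗ[R] N} {r : N →ₗ[R] M} (hri : r ∘ₗ i = LinearMap.id)
    (hZ : ExtendsAlong f' Z)
    (hP : ∀ (P : Type) [AddCommGroup P] [Module R P] [Module.Finite R P] [Module.Projective R P],
      HomVanishes R P M → HomVanishes R P Z) : ExtendsAlong f Z := by
  obtain ⟨u₁, u₀, hu₀, hu₁⟩ := h.exists_lift h' i
  obtain ⟨v₁, v₀, hv₀, hv₁⟩ := h'.exists_lift h r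
  obtain ⟨_, _, _, _, _, hfg⟩ := h
  obtain ⟨s, hs⟩ := exists_lift_of_exact hfg (LinearMap.id - v₀ ∘ₗ u₀) (by
    rw [LinearMap.comp_sub, ← LinearMap.comp_assoc, hv₀, LinearMap.comp_assoc, hu₀,
      ← LinearMap.comp_assoc, hri]
    simp)
  have hs' (x : P₀) : f (s x) = x - v₀ (u₀ x) := LinearMap.congr_fun hs x
  have hu₁' (x : P₁) : u₀ (f x) = f' (u₁ x) := LinearMap.congr_fun hu₁ x
  have hv₁' (x : Q₁) : v₀ (f' x) = f (v₁ x) := LinearMap.congr_fun hv₁ x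
  let d : P₁ →ₗ[R] P₁ := LinearMap.id - v₁ ∘ₗ u₁ - s ∘ₗ f
  have hfd : f ∘ₗ d = 0 := by
    ext x
    simp [d, hs', hu₁', hv₁']
  have extends_of_comp (q : P₁ →ₗ[R] Z) (hq : ∃ k, k ∘ₗ f = q ∘ₗ d) : ∃ k, k ∘ₗ f = q := by
    obtain ⟨k, hk⟩ := hq
    obtain ⟨k', hk'⟩ := hZ (q ∘ₗ v₁)
    refine ⟨k' ∘ₗ u₀ + q ∘ₗ s + k, LinearMap.ext fun x => ?_⟩
    have hkx : k (f x) = q (d x) := LinearMap.congr_fun hk x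
    have hkx' : k' (f' (u₁ x)) = q (v₁ (u₁ x)) := LinearMap.congr_fun hk' (u₁ x)
    simp [hkx, hu₁', hkx', d]
  have extends_of_comp_pow (n : ℕ) (q : P₁ →ₗ[R] Z) (hq : q ∘ₗ (d ^ n) = 0) :
      ∃ k, k ∘ₗ f = q := by
    induction n generalizing q with
    | zero => exact ⟨0, by simpa [Module.End.one_eq_id] using hq.symm⟩
    | succ n ih => exact extends_of_comp q (ih (q ∘ₗ d) (by
        rwa [LinearMap.comp_assoc, ← Module.End.mul_eq_comp, ← pow_succ']))
  obtain ⟨n, hn⟩ := exists_comp_pow_eq_zero hfd hf hP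
  exact fun q => extends_of_comp_pow n q (hn q)

end Presentations

/-! ### Torsion classes -/

section TorsionClass

/-- `X` belongs to the smallest torsion class containing `B`: every module receiving no nonzero
map from `B` receives none from `X`. -/
def MemTorsionClass (R : Type) [Ring R] (B X : Type*) [AddCommGroup B] [Module R B]
    [AddCommGroup X] [Module R X] : Prop :=
  ∀ (N : Type) [AddCommGroup N] [Module R N], HomVanishes R B N → HomVanishes R X N

variable {B X Y : Type*} [AddCommGroup B] [Module R B] [AddCommGroup X] [Module R X]
  [AddCommGroup Y] [Module R Y]

theorem MemTorsionClass.of_generates (h : MemTorsionClass R B X) (h' : Generates R X Y) :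
    MemTorsionClass R B Y :=
  fun N _ _ hN => h'.homVanishes (h N hN)

end TorsionClass

/-! ### Co-Bongartz completion -/

section CoBongartz

variable {P₁ P₀ Q M Z : Type*} [AddCommGroup P₁] [Module R P₁] [AddCommGroup P₀] [Module R P₀]
  [AddCommGroup Q] [Module R Q] [AddCommGroup M] [Module R M] [AddCommGroup Z] [Module R Z]

theorem IsProjPresentation.coprod {f : P₁ →ₗ[R] P₀} {g : P₀ →ₗ[R] M}
    (h : IsProjPresentation f g) [Module.Finite R Q] [Module.Projective R Q] (q : Q →ₗ[R] P₀) :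
    IsProjPresentation (f.coprod q) ((LinearMap.range (g ∘ₗ q)).mkQ ∘ₗ g) := by
  obtain ⟨_, _, _, _, hg, hfg⟩ := h
  refine ⟨inferInstance, inferInstance, inferInstance, inferInstance,
    (Submodule.mkQ_surjective _).comp hg, fun y => ⟨fun hy => ?_, ?_⟩⟩
  · obtain ⟨x, hx⟩ := (Submodule.Quotient.mk_eq_zero _).1 hy
    obtain ⟨z, hz⟩ := (hfg (y - q x)).1 (by rw [map_sub, ← hx, LinearMap.comp_apply, sub_self])
    exact ⟨(z, x), by rw [LinearMap.coprod_apply, hz, sub_add_cancel]⟩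
  · rintro ⟨⟨z, x⟩, rfl⟩
    refine (Submodule.Quotient.mk_eq_zero _).2 ⟨x, ?_⟩
    simp [hfg.apply_apply_eq_zero]

theorem ExtendsAlong.coprod {f : P₁ →ₗ[R] P₀} {g : P₀ →ₗ[R] M} (hfg : Function.Exact f g)
    (h : ExtendsAlong f Z) {q : Q →ₗ[R] P₀} (hq : ExtendsAlong (g ∘ₗ q) Z) :
    ExtendsAlong (f.coprod q) Z := by
  intro t
  obtain ⟨k, hk⟩ := h (t ∘ₗ LinearMap.inl R _ _)
  obtain ⟨c, hc⟩ := hq (t ∘ₗ LinearMap.inr R _ _ - k ∘ₗ q)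
  refine ⟨k + c ∘ₗ g, LinearMap.prod_ext ?_ ?_⟩
  · rw [← hk]
    ext x
    simp [hfg.apply_apply_eq_zero]
  · rw [LinearMap.comp_assoc, LinearMap.coprod_inr, LinearMap.add_comp, LinearMap.comp_assoc, hc,
      add_sub_cancel]

theorem ExtendsAlong.homVanishes_of_coprod {f : P₁ →ₗ[R] P₀} {g : P₀ →ₗ[R] M}
    (hfg : Function.Exact f g) (hg : Function.Surjective g) {q : Q →ₗ[R] P₀}
    (h : ExtendsAlong (f.coprod q) Z) (hM : HomVanishes R M Z) : HomVanishes R Q Z := by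
  intro t
  obtain ⟨k, hk⟩ := h (t ∘ₗ LinearMap.snd R _ _)
  obtain ⟨s, rfl⟩ := exists_comp_eq_of_exact hfg hg k (by
    rw [← LinearMap.coprod_inl f q, ← LinearMap.comp_assoc, hk, LinearMap.comp_assoc,
      LinearMap.snd_comp_inl, LinearMap.comp_zero])
  rw [hM s, LinearMap.zero_comp, LinearMap.zero_comp] at hk
  rw [← LinearMap.comp_id t, ← LinearMap.snd_comp_inr R P₁ Q, ← LinearMap.comp_assoc, ← hk,
    LinearMap.zero_comp]

/-- `M` is the co-Bongartz completion of `U`, witnessed by a projective presentation `f`: the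
module `M` contains `U` as a summand, and the modules `Z` with `Hom(f, Z)` surjective are exactly
those generated by `U`. -/
structure IsCoBongartzCompletion (U : Type*) [AddCommGroup U] [Module R U] (f : P₁ →ₗ[R] P₀)
    (g : P₀ →ₗ[R] M) : Prop extends IsProjPresentation f g where
  memAdd : MemAdd R U M
  generates : Generates R U M
  extendsAlong_iff : ∀ (Z : Type) [AddCommGroup Z] [Module R Z] [Module.Finite R Z],
    ExtendsAlong f Z ↔ Generates R U Z

theorem IsTauRigid.exists_isCoBongartzCompletion [IsArtinAlgebra R] {U : Type} [AddCommGroup U]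
    [Module R U] [Module.Finite R U] (hU : IsTauRigid R U) :
    ∃ (M P₁ P₀ : ModuleCat.{0} R) (f : P₁ →ₗ[R] P₀) (g : P₀ →ₗ[R] M),
      IsCoBongartzCompletion U f g := by
  obtain ⟨P₁, P₀, f, g, h, hf⟩ := id hU
  obtain ⟨n, q, hq⟩ := exists_extendsAlong_pi (R := R) U R
  have hn := h.pi (Fin n)
  obtain ⟨q', rfl⟩ := Module.projective_lifting_property (g.compLeft (Fin n)) q hn.surjective
  refine ⟨.of R (U × ((Fin n → U) ⧸ LinearMap.range (g.compLeft (Fin n) ∘ₗ q'))),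
    .of R (P₁ × ((Fin n → P₁) × R)), .of R (P₀ × (Fin n → P₀)), f.prodMap (LinearMap.coprod _ q'),
    g.prodMap _, h.prodMap (hn.coprod q'), ?_, ?_, fun Z _ _ _ => ⟨fun hZ => ?_, fun hZ => ?_⟩⟩
  · exact MemAdd.refl.of_retract (LinearMap.fst_comp_inl R U _)
  · exact Generates.refl.prod ((Generates.refl.pi (Fin n)).of_surjective
      (Submodule.mkQ_surjective _))
  · have := h.projective_left
    have := hn.projective_left
    have hR : HomVanishes R R (Z ⧸ traceSubmodule R U Z) :=
      (hZ.of_prodMap_right.of_surjective (Submodule.mkQ_surjective _)).homVanishes_of_coprod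
        hn.exact hn.surjective (hU.homVanishes_quotient_traceSubmodule.pi_left (Fin n))
    obtain ⟨m, p, hp⟩ := Module.Finite.exists_fin' R Z
    exact generates_of_homVanishes_quotient ((hR.pi_left (Fin m)).of_surjective hp)
  · have := h.projective_left
    have := hn.projective_left
    exact (hf.prodMap ((hf.compLeft (Fin n)).coprod hn.exact hq)).of_generates hZ

/-- `P` is an additive generator of the finitely generated projective modules `Q` with
`Hom(Q, M) = 0`. -/
structure IsOrthogonalProjectiveGenerator (R : Type) [Ring R] (M P : Type*) [AddCommGroup M]
    [Module R M] [AddCommGroup P] [Module R P] : Prop where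
  finite : Module.Finite R P
  projective : Module.Projective R P
  homVanishes : HomVanishes R P M
  memAdd : ∀ (Q : Type) [AddCommGroup Q] [Module R Q] [Module.Finite R Q] [Module.Projective R Q],
    HomVanishes R Q M → MemAdd R Q P

theorem memAdd_of_traceSubmodule_eq_top [IsArtinAlgebra R] [Module.Finite R M] [Module.Finite R Q]
    [Module.Projective R Q] (h : traceSubmodule R M Q = ⊤) : MemAdd R Q M := by
  obtain ⟨n, p, hp⟩ := exists_liftsAlong_pi (R := R) M Q
  obtain ⟨s, hs⟩ := Module.projective_lifting_property p LinearMap.id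
    (hp.surjective_of_traceSubmodule_eq_top h)
  exact ⟨Fin n, inferInstance, s, p, hs⟩

variable (R M) in
theorem exists_isOrthogonalProjectiveGenerator [IsArtinAlgebra R] :
    ∃ P : ModuleCat.{0} R, IsOrthogonalProjectiveGenerator R M P := by
  obtain ⟨P, ⟨_, _, hP⟩, hmax⟩ := exists_maximalFor_of_wellFoundedGT
    (fun P : ModuleCat.{0} R => Module.Finite R P ∧ Module.Projective R P ∧ HomVanishes R P M)
    (fun P => traceSubmodule R P R)
    ⟨.of R PUnit, inferInstanceAs (Module.Finite R PUnit),
      inferInstanceAs (Module.Projective R PUnit), fun _ => Subsingleton.elim _ _⟩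
  refine ⟨P, ‹_›, ‹_›, hP, fun Q _ _ _ _ hQ => memAdd_of_traceSubmodule_eq_top
    (traceSubmodule_eq_top_of_projective fun t => ?_)⟩
  have hle : traceSubmodule R (P × Q) R ≤ traceSubmodule R P R :=
    hmax (j := .of R (P × Q)) ⟨inferInstanceAs (Module.Finite R (P × Q)),
      inferInstanceAs (Module.Projective R (P × Q)), hP.prod_left hQ⟩
      (traceSubmodule_le_of_surjective (q := LinearMap.fst R P Q) LinearMap.fst_surjective)
  exact (range_le_traceSubmodule t).trans
    ((traceSubmodule_le_of_surjective (q := LinearMap.snd R P Q) LinearMap.snd_surjective).trans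
      hle)

end CoBongartz

section Maximality

variable {U P₁ P₀ M P W : Type} [AddCommGroup U] [Module R U] [AddCommGroup P₁] [Module R P₁]
  [AddCommGroup P₀] [Module R P₀] [AddCommGroup M] [Module R M] [AddCommGroup P] [Module R P]
  [AddCommGroup W] [Module R W]

theorem IsCoBongartzCompletion.memAdd_of_isTauRigid [IsArtinAlgebra R] {f : P₁ →ₗ[R] P₀}
    {g : P₀ →ₗ[R] M} (h : IsCoBongartzCompletion U f g)
    (hP : IsOrthogonalProjectiveGenerator R M P) [Module.Finite R W] (hW : IsTauRigid R W)
    (hMW : MemAdd R M W) (hPW : HomVanishes R P W) : MemAdd R W M := by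
  have := h.finite_right
  have : Module.Finite R M := .of_surjective g h.surjective
  obtain ⟨Q₁, Q₀, f', g', h', hf'⟩ := hW
  obtain ⟨ι, _, i, r, hri⟩ := id hMW
  have hfM : ExtendsAlong f M := (h.extendsAlong_iff M).2 h.generates
  have hfW : ExtendsAlong f W := hfM.of_retract h.toIsProjPresentation (h'.pi ι) hri
    (hf'.compLeft ι) fun Q _ _ _ _ hQ => (hP.memAdd Q hQ).generates.homVanishes hPW
  have hMW' : Generates R M W := h.memAdd.generates.trans ((h.extendsAlong_iff W).1 hfW)
  obtain ⟨n, p, hp⟩ := exists_liftsAlong_pi (R := R) M W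
  have hker : Generates R U (LinearMap.ker p) :=
    (h.extendsAlong_iff _).1 ((hfM.pi (Fin n)).ker h.exact h.surjective hp)
  have := h'.projective_left
  have := h'.projective_right
  obtain ⟨s, hs⟩ := liftsAlong_of_extendsAlong_ker h'.exact h'.surjective
    (hp.surjective_of_traceSubmodule_eq_top hMW'.traceSubmodule_eq_top)
    (hf'.of_generates (hMW.generates.trans (h.memAdd.generates.trans hker))) LinearMap.id
  exact ⟨Fin n, inferInstance, s, p, hs⟩

variable (R M) in
theorem exists_basic_memAdd [IsArtinianRing R] [Module.Finite R M] :
    ∃ B : ModuleCat.{0} R, MemAdd R B M ∧ MemAdd R M B ∧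
      ∀ (N X : Type) [AddCommGroup N] [Module R N] [AddCommGroup X] [Module R X],
        (B ≃ₗ[R] ((N × N) × X)) → Subsingleton N := by
  obtain ⟨B, ⟨hBM, hMB⟩, hmin⟩ := exists_minimalFor_of_wellFoundedLT
    (fun B : ModuleCat.{0} R => MemAdd R B M ∧ MemAdd R M B) (fun B => Module.length R B)
    ⟨.of R M, MemAdd.refl, MemAdd.refl⟩
  refine ⟨B, hBM, hMB, fun N X _ _ _ _ e => ?_⟩
  have hB : MemAdd R B (N × X) := by
    have hN : MemAdd R N (N × X) := MemAdd.refl.of_retract (LinearMap.fst_comp_inl R N X)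
    have hX : MemAdd R X (N × X) := MemAdd.refl.of_retract (LinearMap.snd_comp_inr R N X)
    exact (MemAdd.of_equiv e).trans ((hN.prod hN).prod hX)
  have hB' : MemAdd R (N × X) B := (MemAdd.of_equiv e.symm).of_retract
    (i := (LinearMap.inl R N N).prodMap LinearMap.id)
    (q := (LinearMap.fst R N N).prodMap LinearMap.id) (by ext <;> simp)
  have : Module.Finite R B := hBM.generates.finite
  have : Module.Finite R (N × X) := hB'.generates.finite
  have hlen : Module.length R B = Module.length R N + Module.length R (N × X) := by
    rw [e.length_eq, Module.length_prod, Module.length_prod, Module.length_prod, add_assoc]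
  have hle := hmin (j := .of R (N × X)) ⟨hB'.trans hBM, hMB.trans hB⟩
    (le_add_self.trans_eq hlen.symm)
  exact Module.length_eq_zero_iff.1 (nonpos_iff_eq_zero.1
    ((ENat.addLECancellable_of_ne_top Module.length_ne_top).add_le_iff_nonpos_left.1
      (hlen.symm.trans_le hle)))

end Maximality

/-! ### Support τ-tilting modules -/

section SupportTauTilting

theorem isTauRigidMod_iff (M : ModCat R) : IsTauRigidMod M ↔ IsTauRigid R M := by
  constructor
  · rintro ⟨P₁, P₀, f, g, h₁, h₀, _, _, hg, hfg, hf⟩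
    refine ⟨P₁, P₀, f.hom, g.hom, ⟨‹_›, ‹_›, (IsProjective.iff_projective P₁).2 h₁,
      (IsProjective.iff_projective P₀).2 h₀, hg, hfg⟩, fun t => ?_⟩
    obtain ⟨k, hk⟩ := hf (ModuleCat.ofHom t)
    exact ⟨k.hom, congrArg ModuleCat.Hom.hom hk⟩
  · rintro ⟨P₁, P₀, f, g, ⟨h₁, h₀, hp₁, hp₀, hg, hfg⟩, hf⟩
    refine ⟨P₁, P₀, ModuleCat.ofHom f, ModuleCat.ofHom g, (IsProjective.iff_projective P₁).1 hp₁,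
      (IsProjective.iff_projective P₀).1 hp₀, h₁, h₀, hg, hfg, fun t => ?_⟩
    obtain ⟨k, hk⟩ := hf t.hom
    exact ⟨ModuleCat.ofHom k, ModuleCat.hom_ext hk⟩

theorem MemAdd.memAddMod {N M : ModCat R} (h : MemAdd R N M) : MemAddMod N M := by
  obtain ⟨ι, _, i, r, hri⟩ := h
  let e := LinearEquiv.funCongrLeft R M (Finite.equivFin ι).symm
  let b := ModuleCat.biproductIsoPi fun _ : Fin (Nat.card ι) => M
  refine ⟨Nat.card ι, ModuleCat.ofHom (e.toLinearMap ∘ₗ i) ≫ b.inv,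
    b.hom ≫ ModuleCat.ofHom (r ∘ₗ e.symm.toLinearMap), ?_⟩
  rw [Category.assoc, Iso.inv_hom_id_assoc]
  ext x
  simpa using LinearMap.congr_fun hri x

theorem isSupportTauTiltingMod_of_maximal [IsArtinianRing R] {M P : ModCat R}
    [Module.Finite R M] (hM : IsTauRigid R M) [Module.Finite R P] [Module.Projective R P]
    (hPM : HomVanishes R P M)
    (hmax : ∀ (N Q : Type) [AddCommGroup N] [Module R N] [AddCommGroup Q] [Module R Q]
      [Module.Finite R (M × N)] [Module.Finite R (P × Q)] [Module.Projective R (P × Q)],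
      IsTauRigid R (M × N) → HomVanishes R (P × Q) (M × N) → MemAdd R N M ∧ MemAdd R Q P) :
    IsSupportTauTiltingMod M := by
  refine ⟨P, ⟨‹_›, (isTauRigidMod_iff M).2 hM, ‹_›, (IsProjective.iff_projective P).1 ‹_›,
    fun t => ModuleCat.hom_ext (hPM t.hom)⟩, ?_⟩
  rintro N Q ⟨hfin, hrig, hfin', hproj, hvan⟩
  let eN : (M ⊞ N : ModCat R) ≃ₗ[R] M × N := (ModuleCat.biprodIsoProd M N).toLinearEquiv
  let eQ : (P ⊞ Q : ModCat R) ≃ₗ[R] P × Q := (ModuleCat.biprodIsoProd P Q).toLinearEquiv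
  have : Module.Finite R (M ⊞ N : ModCat R) := hfin
  have : Module.Finite R (P ⊞ Q : ModCat R) := hfin'
  have : Module.Projective R (P ⊞ Q : ModCat R) := (IsProjective.iff_projective _).2 hproj
  have : Module.Finite R (M × N) := .equiv eN
  have : Module.Finite R (P × Q) := .equiv eQ
  have : Module.Projective R (P × Q) := .of_equiv eQ
  have hvan' : HomVanishes R (P ⊞ Q : ModCat R) (M ⊞ N : ModCat R) := fun t =>
    congrArg ModuleCat.Hom.hom (hvan (ModuleCat.ofHom t))
  obtain ⟨hN, hQ⟩ := hmax N Q
    (((isTauRigidMod_iff _).1 hrig).of_memAdd (MemAdd.of_equiv eN.symm))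
    ((hvan'.of_surjective eQ.surjective).of_injective eN.symm.injective)
  exact ⟨hN.memAddMod, hQ.memAddMod⟩

theorem IsCoBongartzCompletion.isSupportTauTiltingMod [IsArtinAlgebra R] {U P₁ P₀ M : Type}
    [AddCommGroup U] [Module R U] [AddCommGroup P₁] [Module R P₁] [AddCommGroup P₀] [Module R P₀]
    [AddCommGroup M] [Module R M] {f : P₁ →ₗ[R] P₀} {g : P₀ →ₗ[R] M}
    (h : IsCoBongartzCompletion U f g) {B : ModCat R} (hBM : MemAdd R B M) (hMB : MemAdd R M B) :
    IsSupportTauTiltingMod B := by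
  have := h.finite_right
  have : Module.Finite R M := .of_surjective g h.surjective
  have : Module.Finite R B := hBM.generates.finite
  obtain ⟨P, hP⟩ := exists_isOrthogonalProjectiveGenerator R M
  have := hP.finite
  have := hP.projective
  have hM : IsTauRigid R M :=
    ⟨.of R P₁, .of R P₀, f, g, h.toIsProjPresentation, (h.extendsAlong_iff M).2 h.generates⟩
  refine isSupportTauTiltingMod_of_maximal (hM.of_memAdd hBM) (hBM.homVanishes hP.homVanishes)
    fun N Q _ _ _ _ _ _ _ hrig hvan => ⟨?_, ?_⟩
  · have : MemAdd R (B × N) M := h.memAdd_of_isTauRigid hP hrig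
      (hMB.trans (MemAdd.refl.of_retract (LinearMap.fst_comp_inl R B N)))
      (hvan.of_surjective (q := LinearMap.fst R P Q) LinearMap.fst_surjective)
    exact (this.of_retract (LinearMap.snd_comp_inr R B N)).trans hMB
  · have : Module.Finite R Q := .of_surjective (LinearMap.snd R P Q) LinearMap.snd_surjective
    have : Module.Projective R Q := .of_split _ _ (LinearMap.snd_comp_inr R P Q)
    exact hP.memAdd Q (hMB.homVanishes
      ((hvan.of_surjective (q := LinearMap.snd R P Q) LinearMap.snd_surjective).of_injective
        (j := LinearMap.inl R B N) LinearMap.inl_injective))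

/-- There are only finitely many classes `Gen U` with `U` a τ-rigid module. -/
def HasFinitelyManyTauRigidGen (R : Type) [Ring R] : Prop :=
  ∃ (n : ℕ) (F : Fin n → ModuleCat.{0} R), ∀ (U : Type) [AddCommGroup U] [Module R U]
    [Module.Finite R U], IsTauRigid R U → ∃ i, Generates R U (F i) ∧ Generates R (F i) U

theorem IsTauTiltingFiniteRing.hasFinitelyManyTauRigidGen [IsArtinAlgebra R]
    (hR : IsTauTiltingFiniteRing R) : HasFinitelyManyTauRigidGen R := by
  obtain ⟨n, F, hF⟩ := hR
  refine ⟨n, F, fun U _ _ _ hU => ?_⟩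
  obtain ⟨M, P₁, P₀, f, g, h⟩ := hU.exists_isCoBongartzCompletion
  have := h.finite_right
  have : Module.Finite R M := .of_surjective g h.surjective
  obtain ⟨B, hBM, hMB, hbasic⟩ := exists_basic_memAdd R M
  have hB : IsBasicMod B := by
    rintro N X ⟨e⟩
    let e' : (((N ⊞ N) ⊞ X : ModCat R) : Type) ≃ₗ[R] (N × N) × X :=
      (ModuleCat.biprodIsoProd (N ⊞ N) X).toLinearEquiv.trans
        ((ModuleCat.biprodIsoProd N N).toLinearEquiv.prodCongr (.refl R X))
    have := hbasic N X (e.toLinearEquiv.trans e')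
    exact ModuleCat.isZero_of_subsingleton N
  obtain ⟨i, ⟨e⟩⟩ := hF B (h.isSupportTauTiltingMod hBM hMB) hB
  have hBF : MemAdd R B (F i) := MemAdd.of_equiv e.toLinearEquiv
  have hFB : MemAdd R (F i) B := MemAdd.of_equiv e.symm.toLinearEquiv
  exact ⟨i, h.generates.trans (hFB.trans hBM).generates,
    (hMB.trans hBF).generates.trans h.memAdd.generates⟩

end SupportTauTilting

/-! ### Bricks and τ-rigid modules -/

/-- `p` is right minimal: every endomorphism of its source over the target is bijective. -/
def IsRightMinimal {X B : Type*} [AddCommGroup X] [Module R X] [AddCommGroup B] [Module R B]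
    (p : X →ₗ[R] B) : Prop :=
  ∀ e : Module.End R X, p ∘ₗ e = p → Function.Bijective e

/-- `B` is a brick: it is nonzero and its nonzero endomorphisms are bijective. -/
structure IsBrick (R : Type) [Ring R] (B : Type*) [AddCommGroup B] [Module R B] : Prop where
  nontrivial : Nontrivial B
  eq_zero_or_bijective : ∀ t : B →ₗ[R] B, t = 0 ∨ Function.Bijective t

section RightMinimal

variable {X : Type} {B N : Type*} [AddCommGroup X] [Module R X] [AddCommGroup B] [Module R B]
  [AddCommGroup N] [Module R N]

theorem exists_isRightMinimal [IsArtinianRing R] [Module.Finite R X] (p : X →ₗ[R] B) :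
    ∃ (Y : ModuleCat.{0} R) (p' : Y →ₗ[R] B),
      IsRightMinimal p' ∧ MemAdd R Y X ∧ ∃ q : X →ₗ[R] Y, p' ∘ₗ q = p := by
  obtain ⟨⟨Y, p'⟩, ⟨hY, q, rfl⟩, hmin⟩ := exists_minimalFor_of_wellFoundedLT
    (fun Y : Σ Y : ModuleCat.{0} R, Y →ₗ[R] B => MemAdd R Y.1 X ∧ ∃ q : X →ₗ[R] Y.1, Y.2 ∘ₗ q = p)
    (fun Y => Module.length R Y.1) ⟨⟨.of R X, p⟩, MemAdd.refl, LinearMap.id, rfl⟩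
  refine ⟨Y, p', fun e he => ?_, hY, q, rfl⟩
  have : Module.Finite R Y := hY.generates.finite
  obtain ⟨n, hcompl, hn⟩ := (e.eventually_isCompl_ker_pow_range_pow.and
    (Filter.eventually_ge_atTop 1)).exists
  have hpow : p' ∘ₗ (e ^ n) = p' := by
    clear hcompl
    induction n, hn using Nat.le_induction with
    | base => rwa [pow_one]
    | succ n _ ih => rw [pow_succ, Module.End.mul_eq_comp, ← LinearMap.comp_assoc, ih, he]
  have hretract : (LinearMap.range (e ^ n)).projectionOnto _ hcompl.symm ∘ₗ
      (LinearMap.range (e ^ n)).subtype = LinearMap.id :=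
    LinearMap.ext fun x => Submodule.projectionOnto_apply_left hcompl.symm x
  have hle : Module.length R Y ≤ Module.length R (LinearMap.range (e ^ n)) :=
    hmin (j := ⟨.of R (LinearMap.range (e ^ n)), p' ∘ₗ Submodule.subtype _⟩)
      ⟨hY.of_retract hretract, (e ^ n).rangeRestrict ∘ₗ q,
        congrArg (· ∘ₗ q) (show (p' ∘ₗ (e ^ n) : Y →ₗ[R] B) = p' from hpow)⟩
      (Module.length_le_of_injective _ (Submodule.subtype_injective _))
  have htop : LinearMap.range (e ^ n) = ⊤ := by
    by_contra hne
    exact hle.not_gt (Submodule.length_lt hne)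
  have hsurj : Function.Surjective e := by
    rw [← LinearMap.range_eq_top, ← top_le_iff, ← htop, ← Nat.sub_add_cancel hn, pow_succ']
    exact LinearMap.range_comp_le_range _ _
  exact ⟨IsNoetherian.injective_of_surjective_endomorphism e hsurj, hsurj⟩

theorem IsRightMinimal.mem_jacobson {p : X →ₗ[R] B} (hp : IsRightMinimal p) {s : Module.End R X}
    (hs : p ∘ₗ s = 0) : s ∈ Ring.jacobson (Module.End R X) := by
  rw [← Ideal.jacobson_bot, Ideal.mem_jacobson_iff]
  intro y
  have hbij : Function.Bijective (1 + s * y : Module.End R X) := hp _ <| by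
    rw [LinearMap.comp_add, Module.End.one_eq_id, LinearMap.comp_id, Module.End.mul_eq_comp,
      ← LinearMap.comp_assoc, hs, LinearMap.zero_comp, add_zero]
  obtain ⟨w, hw⟩ := ((Module.End.isUnit_iff _).2 hbij).exists_left_inv
  refine ⟨1 - y * w * s, Ideal.mem_bot.2 ?_⟩
  calc (1 - y * w * s) * y * s + (1 - y * w * s) - 1
      = y * s - y * (w * (1 + s * y)) * s := by noncomm_ring
    _ = 0 := by rw [hw, mul_one, sub_self]

theorem IsRightMinimal.eq_zero_of_comp_jacobson {p : X →ₗ[R] B} (hp : IsRightMinimal p)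
    (hsurj : Function.Surjective p) (hker : Generates R X (LinearMap.ker p))
    (hN : HomVanishes R B N) {t : X →ₗ[R] N}
    (ht : ∀ s ∈ Ring.jacobson (Module.End R X), t ∘ₗ s = 0) : t = 0 := by
  have hle : LinearMap.ker p ≤ LinearMap.ker t := by
    obtain ⟨ι, _, q, hq⟩ := hker
    classical
    have hzero : t ∘ₗ (LinearMap.ker p).subtype ∘ₗ q = 0 := LinearMap.pi_ext' fun i => by
      let s : Module.End R X := (LinearMap.ker p).subtype ∘ₗ q ∘ₗ LinearMap.single R (fun _ => X) i
      have hs : p ∘ₗ s = 0 := LinearMap.ext fun x => (q (Pi.single i x)).2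
      exact ht s (hp.mem_jacobson hs)
    intro x hx
    obtain ⟨y, hy⟩ := hq ⟨x, hx⟩
    simpa [hy] using LinearMap.congr_fun hzero y
  obtain ⟨s, rfl⟩ := exists_comp_eq_of_ker_le hsurj t hle
  rw [hN s, LinearMap.zero_comp]

theorem IsRightMinimal.homVanishes [IsArtinAlgebra R] [Module.Finite R X] {p : X →ₗ[R] B}
    (hp : IsRightMinimal p) (hsurj : Function.Surjective p)
    (hker : Generates R X (LinearMap.ker p)) (hN : HomVanishes R B N) : HomVanishes R X N := by
  have descend (k : ℕ) (t : X →ₗ[R] N)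
      (ht : ∀ s ∈ Ring.jacobson (Module.End R X) ^ k, t ∘ₗ s = 0) : t = 0 := by
    induction k with
    | zero => exact ht LinearMap.id (by rw [Submodule.pow_zero, Ideal.one_eq_top]; trivial)
    | succ k ih =>
      exact ih fun a ha => hp.eq_zero_of_comp_jacobson hsurj hker hN fun s hs =>
        ht (a * s) (by rw [Submodule.pow_succ]; exact Ideal.mul_mem_mul ha hs)
  obtain ⟨k, hk⟩ := IsSemiprimaryRing.isNilpotent (R := Module.End R X)
  intro t
  refine descend k t fun s hs => ?_
  rw [hk] at hs
  rw [(Submodule.mem_bot _).1 hs, LinearMap.comp_zero]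

end RightMinimal

section TauRigidGenerator

theorem isTauRigid_of_projective (R : Type) [Ring R] (P : Type) [AddCommGroup P] [Module R P]
    [Module.Finite R P] [Module.Projective R P] : IsTauRigid R P := by
  refine ⟨.of R PUnit, .of R P, 0, LinearMap.id, ⟨inferInstanceAs (Module.Finite R PUnit),
    ‹_›, inferInstanceAs (Module.Projective R PUnit), ‹_›, Function.surjective_id, fun x => ?_⟩,
    fun t => ⟨0, LinearMap.ext fun _ => ?_⟩⟩
  · exact ⟨fun hx => ⟨0, hx.symm⟩, fun ⟨_, hy⟩ => hy.symm⟩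
  · exact (map_zero t).symm

theorem HasFinitelyManyTauRigidGen.exists_minimal (hR : HasFinitelyManyTauRigidGen R) (B : Type)
    [AddCommGroup B] [Module R B] [Module.Finite R B] :
    ∃ U : ModuleCat.{0} R, Module.Finite R U ∧ IsTauRigid R U ∧ Generates R U B ∧
      ∀ (X : Type) [AddCommGroup X] [Module R X] [Module.Finite R X], IsTauRigid R X →
        Generates R X B → Generates R U X → Generates R X U := by
  obtain ⟨n, F, hF⟩ := hR
  obtain ⟨m, p, hp⟩ := Module.Finite.exists_fin' R B
  obtain ⟨U, ⟨hfin, hU, hUB⟩, hmin⟩ := exists_minimalFor_of_wellFoundedLT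
    (fun U : ModuleCat.{0} R => Module.Finite R U ∧ IsTauRigid R U ∧ Generates R U B)
    (fun U => {i | Generates R U (F i)})
    ⟨.of R R, inferInstanceAs (Module.Finite R R), isTauRigid_of_projective R R,
      Fin m, inferInstance, p, hp⟩
  refine ⟨U, hfin, hU, hUB, fun X _ _ _ hX hXB hUX => ?_⟩
  obtain ⟨i, hUi, hiU⟩ := hF U hU
  have hXi : Generates R X (F i) :=
    hmin (j := .of R X) ⟨‹_›, hX, hXB⟩ (fun _ hj => hUX.trans hj) hUi
  exact hXi.trans hiU

theorem HasFinitelyManyTauRigidGen.exists_memTorsionClass [IsArtinAlgebra R]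
    (hR : HasFinitelyManyTauRigidGen R) (B : Type) [AddCommGroup B] [Module R B]
    [Module.Finite R B] :
    ∃ X : ModuleCat.{0} R, Module.Finite R X ∧ IsTauRigid R X ∧ Generates R X B ∧
      MemTorsionClass R B X := by
  obtain ⟨U, _, hU, hUB, hmin⟩ := hR.exists_minimal B
  obtain ⟨M, P₁, P₀, f, g, h⟩ := hU.exists_isCoBongartzCompletion
  have := h.generates.finite
  obtain ⟨n, p', hp'⟩ := exists_liftsAlong_pi (R := R) M B
  obtain ⟨X, p, hp, hXM, q, rfl⟩ := exists_isRightMinimal p'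
  replace hXM : MemAdd R X M := hXM.trans (MemAdd.refl.pi (Fin n))
  have hlift : LiftsAlong p M := fun t => (hp' t).imp' (q ∘ₗ ·) fun _ hs => hs
  have hsurj : Function.Surjective p := hlift.surjective_of_traceSubmodule_eq_top
    (h.memAdd.generates.trans hUB).traceSubmodule_eq_top
  have : Module.Finite R X := hXM.generates.finite
  have hUX : Generates R U X := h.generates.trans hXM.generates
  have hX : IsTauRigid R X := IsTauRigid.of_memAdd
    ⟨P₁, P₀, f, g, h.toIsProjPresentation, (h.extendsAlong_iff M).2 h.generates⟩ hXM
  have hXB : Generates R X B := Generates.refl.of_surjective hsurj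
  have hker : Generates R X (LinearMap.ker p) := (hmin X hX hXB hUX).trans
    ((h.extendsAlong_iff _).1 (((h.extendsAlong_iff X).2 hUX).ker h.exact h.surjective hlift))
  exact ⟨X, this, hX, hXB, fun N _ _ hN => hp.homVanishes hsurj hker hN⟩

end TauRigidGenerator

section Bricks

variable {B C : Type} [AddCommGroup B] [Module R B] [AddCommGroup C] [Module R C]

theorem MemTorsionClass.exists_ne_zero (h : MemTorsionClass R B C) [Nontrivial C] :
    ∃ t : B →ₗ[R] C, t ≠ 0 := by
  by_contra! h0
  obtain ⟨x, hx⟩ := exists_ne (0 : C)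
  exact hx (LinearMap.congr_fun (h C h0 LinearMap.id) x)

theorem IsBrick.surjective_of_ne_zero (hC : IsBrick R C) (h : MemTorsionClass R C B)
    {t : B →ₗ[R] C} (ht : t ≠ 0) : Function.Surjective t := by
  have : Nontrivial (LinearMap.range t) :=
    (Submodule.nontrivial_iff_ne_bot).2 (mt LinearMap.range_eq_bot.1 ht)
  obtain ⟨s, hs⟩ := (h.of_generates
    (Generates.refl.of_surjective t.surjective_rangeRestrict)).exists_ne_zero
  have hbij := (hC.eq_zero_or_bijective ((LinearMap.range t).subtype ∘ₗ s)).resolve_left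
    fun h0 => hs (LinearMap.ext fun x => Subtype.ext (LinearMap.congr_fun h0 x))
  intro c
  obtain ⟨x, rfl⟩ := hbij.surjective c
  exact (s x).2

theorem IsBrick.nonempty_linearEquiv [IsNoetherianRing R] [Module.Finite R B] (hB : IsBrick R B)
    (hC : IsBrick R C) (h : MemTorsionClass R C B) (h' : MemTorsionClass R B C) :
    Nonempty (B ≃ₗ[R] C) := by
  have := hB.nontrivial
  have := hC.nontrivial
  obtain ⟨t, ht⟩ := h'.exists_ne_zero
  obtain ⟨s, hs⟩ := h.exists_ne_zero
  have hts := hC.surjective_of_ne_zero h ht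
  have hst : Function.Injective (s ∘ₗ t) :=
    IsNoetherian.injective_of_surjective_endomorphism _
      ((hB.surjective_of_ne_zero h' hs).comp hts)
  exact ⟨.ofBijective t ⟨Function.Injective.of_comp (f := s) hst, hts⟩⟩

theorem HasFinitelyManyTauRigidGen.exists_fin_isBrick [IsArtinAlgebra R]
    (hR : HasFinitelyManyTauRigidGen R) : ∃ (n : ℕ) (F : Fin n → ModuleCat.{0} R),
      ∀ (B : Type) [AddCommGroup B] [Module R B] [Module.Finite R B], IsBrick R B →
        ∃ i, Nonempty (B ≃ₗ[R] F i) := by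
  obtain ⟨n, F, hF⟩ := id hR
  have represent (i : Fin n) : ∃ C : ModuleCat.{0} R, ∀ (B : Type) [AddCommGroup B] [Module R B]
      [Module.Finite R B], IsBrick R B → Generates R (F i) B → MemTorsionClass R B (F i) →
        Nonempty (B ≃ₗ[R] C) := by
    by_cases hi : ∃ C : ModuleCat.{0} R,
      IsBrick R C ∧ Generates R (F i) C ∧ MemTorsionClass R C (F i)
    · obtain ⟨C, hC, hiC, hCi⟩ := hi
      exact ⟨C, fun B _ _ _ hB hiB hBi =>
        hB.nonempty_linearEquiv hC (hCi.of_generates hiB) (hBi.of_generates hiC)⟩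
    · exact ⟨.of R PUnit, fun B _ _ _ hB hiB hBi => (hi ⟨.of R B, hB, hiB, hBi⟩).elim⟩
  choose C hC using represent
  refine ⟨n, C, fun B _ _ _ hB => ?_⟩
  obtain ⟨X, _, hX, hXB, hBX⟩ := hR.exists_memTorsionClass B
  obtain ⟨i, hXi, hiX⟩ := hF X hX
  exact ⟨i, hC i B hB (hiX.trans hXB) (hBX.of_generates hXi)⟩

end Bricks

/-! ### Extensions in abelian categories -/

section AbelianExtensions

variable {H : Type u} [Category.{v} H] [Abelian H] {T X Y Z E : H}

/-- Every extension of `T` by `X` splits, i.e. `Ext¹(T, X) = 0` in the sense of Yoneda. -/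
def ExtSplits (T X : H) : Prop :=
  ∀ (E : H) (i : X ⟶ E) (p : E ⟶ T) (w : i ≫ p = 0), (ShortComplex.mk i p w).ShortExact →
    ∃ s : T ⟶ E, s ≫ p = 𝟙 T

theorem exists_shortExact_pushout {i : X ⟶ E} {p : E ⟶ Z} {w : i ≫ p = 0}
    (h : (ShortComplex.mk i p w).ShortExact) (t : X ⟶ Y) :
    ∃ (P : H) (j : Y ⟶ P) (q : P ⟶ Z) (w' : j ≫ q = 0) (s : E ⟶ P),
      (ShortComplex.mk j q w').ShortExact ∧ i ≫ s = t ≫ j ∧ s ≫ q = p := by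
  have : Mono i := h.mono_f
  have : Epi p := h.epi_g
  let q : pushout i t ⟶ Z := pushout.desc p 0 (by rw [w, comp_zero])
  have hp : pushout.inl i t ≫ q = p := pushout.inl_desc _ _ _
  have hq : pushout.inr i t ≫ q = 0 := pushout.inr_desc _ _ _
  have : Epi q := epi_of_epi_fac hp
  refine ⟨pushout i t, pushout.inr i t, q, hq, pushout.inl i t,
    .mk' (ShortComplex.exact_of_g_is_cokernel _ (CokernelCofork.IsColimit.ofπ' _ _
      fun {A} x hx => ?_)) inferInstance inferInstance, pushout.condition, hp⟩
  have hix : i ≫ pushout.inl i t ≫ x = 0 := by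
    rw [← Category.assoc, pushout.condition, Category.assoc, hx, comp_zero]
  refine ⟨h.exact.desc _ hix, pushout.hom_ext ?_ ?_⟩
  · rw [← Category.assoc, hp]
    exact h.exact.g_desc _ hix
  · rw [← Category.assoc, hq, zero_comp, hx]

theorem exists_shortExact_pullback {i : X ⟶ E} {p : E ⟶ Z} {w : i ≫ p = 0}
    (h : (ShortComplex.mk i p w).ShortExact) (t : Y ⟶ Z) :
    ∃ (P : H) (j : X ⟶ P) (q : P ⟶ Y) (w' : j ≫ q = 0) (s : P ⟶ E),
      (ShortComplex.mk j q w').ShortExact ∧ j ≫ s = i ∧ s ≫ p = q ≫ t := by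
  have : Mono i := h.mono_f
  have : Epi p := h.epi_g
  let j : X ⟶ pullback p t := pullback.lift i 0 (by rw [w, zero_comp])
  have hi : j ≫ pullback.fst p t = i := pullback.lift_fst _ _ _
  have hj : j ≫ pullback.snd p t = 0 := pullback.lift_snd _ _ _
  have : Mono j := mono_of_mono_fac hi
  refine ⟨pullback p t, j, pullback.snd p t, hj, pullback.fst p t,
    .mk' (ShortComplex.exact_of_f_is_kernel _ (KernelFork.IsLimit.ofι' _ _
      fun {A} x hx => ?_)) inferInstance inferInstance, hi, pullback.condition⟩
  have hxp : (x ≫ pullback.fst p t) ≫ p = 0 := by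
    rw [Category.assoc, pullback.condition, ← Category.assoc, hx, zero_comp]
  refine ⟨h.exact.lift _ hxp, pullback.hom_ext ?_ ?_⟩
  · rw [Category.assoc, hi]
    exact h.exact.lift_f _ hxp
  · rw [Category.assoc, hj, comp_zero, hx]

theorem ExtSplits.exists_extension (h : ExtSplits T X) {i : Z ⟶ E} {p : E ⟶ T} {w : i ≫ p = 0}
    (hip : (ShortComplex.mk i p w).ShortExact) (t : Z ⟶ X) : ∃ s : E ⟶ X, i ≫ s = t := by
  obtain ⟨P, j, q, w', s, hjq, his, -⟩ := exists_shortExact_pushout hip t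
  obtain ⟨σ, hσ⟩ := h P j q w' hjq
  have : Mono j := hjq.mono_f
  let split := ShortComplex.Splitting.ofExactOfSection _ hjq.exact σ hσ hjq.mono_f
  exact ⟨s ≫ split.r, by rw [← Category.assoc, his, Category.assoc, split.f_r, Category.comp_id]⟩

theorem ExtSplits.exists_lift (h : ExtSplits T X) {i : X ⟶ E} {p : E ⟶ Z} {w : i ≫ p = 0}
    (hip : (ShortComplex.mk i p w).ShortExact) (t : T ⟶ Z) : ∃ s : T ⟶ E, s ≫ p = t := by
  obtain ⟨P, j, q, w', s, hjq, -, hsp⟩ := exists_shortExact_pullback hip t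
  obtain ⟨σ, hσ⟩ := h P j q w' hjq
  exact ⟨σ ≫ s, by rw [Category.assoc, hsp, ← Category.assoc, hσ, Category.id_comp]⟩

end AbelianExtensions

/-! ### Short exact sequences of modules and vanishing of Ext -/

section ExtVanishing

open CategoryTheory.Abelian

/-- `Extⁿ(V, B) = 0`. -/
def ExtVanishes (R : Type) [Ring R] (n : ℕ) (V B : Type) [AddCommGroup V] [Module R V]
    [AddCommGroup B] [Module R B] : Prop :=
  Subsingleton (Ext (ModuleCat.of R V) (ModuleCat.of R B) n)

variable {A M Q B C : Type} [AddCommGroup A] [Module R A] [AddCommGroup M] [Module R M]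
  [AddCommGroup Q] [Module R Q] [AddCommGroup B] [Module R B] [AddCommGroup C] [Module R C]

/-- `0 → A → M → Q → 0` is exact. -/
structure IsShortExact (i : A →ₗ[R] M) (p : M →ₗ[R] Q) : Prop where
  injective : Function.Injective i
  surjective : Function.Surjective p
  exact : Function.Exact i p

theorem isShortExact_subtype_ker {p : M →ₗ[R] Q} (hp : Function.Surjective p) :
    IsShortExact (LinearMap.ker p).subtype p :=
  ⟨Subtype.val_injective, hp, p.exact_subtype_ker_map⟩

theorem isShortExact_subtype_mkQ (A : Submodule R M) : IsShortExact A.subtype A.mkQ :=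
  ⟨Subtype.val_injective, A.mkQ_surjective, LinearMap.exact_subtype_mkQ A⟩

theorem isShortExact_mkQ_range {i : A →ₗ[R] M} (hi : Function.Injective i) :
    IsShortExact i (LinearMap.range i).mkQ :=
  ⟨hi, Submodule.mkQ_surjective _, LinearMap.exact_map_mkQ_range i⟩

namespace IsShortExact

variable {i : A →ₗ[R] M} {p : M →ₗ[R] Q} {n : ℕ}

theorem shortExact (h : IsShortExact i p) :
    (ModuleCat.shortComplexOfCompEqZero i p h.exact.linearMap_comp_eq_zero).ShortExact :=
  ModuleCat.shortComplex_shortExact _ h.exact h.injective h.surjective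

theorem extVanishes_from_left (h : IsShortExact i p) (hM : ExtVanishes R n M B)
    (hQ : ExtVanishes R (n + 1) Q B) : ExtVanishes R n A B := by
  refine subsingleton_of_forall_eq 0 fun x => ?_
  obtain ⟨y, rfl⟩ := Ext.contravariant_sequence_exact₁ h.shortExact _ x (add_comm 1 n)
    (hQ.elim _ _)
  rw [show y = 0 from hM.elim _ _, Ext.comp_zero]

theorem extVanishes_from_middle (h : IsShortExact i p) (hA : ExtVanishes R n A B)
    (hQ : ExtVanishes R n Q B) : ExtVanishes R n M B := by
  refine subsingleton_of_forall_eq 0 fun x => ?_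
  obtain ⟨y, rfl⟩ := Ext.contravariant_sequence_exact₂ h.shortExact _ x (hA.elim _ _)
  rw [show y = 0 from hQ.elim _ _, Ext.comp_zero]

theorem extVanishes_from_right (h : IsShortExact i p) (hA : ExtVanishes R n A B)
    (hM : ExtVanishes R (n + 1) M B) : ExtVanishes R (n + 1) Q B := by
  refine subsingleton_of_forall_eq 0 fun x => ?_
  obtain ⟨y, rfl⟩ := Ext.contravariant_sequence_exact₃ h.shortExact _ x (hM.elim _ _)
    (add_comm 1 n)
  rw [show y = 0 from hA.elim _ _, Ext.comp_zero]

theorem extVanishes_to_right (h : IsShortExact i p) (hM : ExtVanishes R n B M)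
    (hA : ExtVanishes R (n + 1) B A) : ExtVanishes R n B Q := by
  refine subsingleton_of_forall_eq 0 fun x => ?_
  obtain ⟨y, rfl⟩ := Ext.covariant_sequence_exact₃ _ h.shortExact x rfl (hA.elim _ _)
  rw [show y = 0 from hM.elim _ _, Ext.zero_comp]

theorem liftsAlong (h : IsShortExact i p) (hA : ExtVanishes R 1 C A) : LiftsAlong p C := by
  intro t
  obtain ⟨y, hy⟩ := Ext.covariant_sequence_exact₃ (.of R C) h.shortExact
    (Ext.mk₀ (ModuleCat.ofHom t)) rfl (hA.elim _ _)
  obtain ⟨s, rfl⟩ := (Ext.mk₀_bijective _ _).2 y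
  rw [Ext.mk₀_comp_mk₀] at hy
  exact ⟨s.hom, congrArg ModuleCat.Hom.hom ((Ext.mk₀_bijective _ _).1 hy)⟩

theorem extendsAlong (h : IsShortExact i p) (hQ : ExtVanishes R 1 Q C) : ExtendsAlong i C := by
  intro t
  obtain ⟨y, hy⟩ := Ext.contravariant_sequence_exact₁ h.shortExact (.of R C)
    (Ext.mk₀ (ModuleCat.ofHom t)) rfl (hQ.elim _ _)
  obtain ⟨s, rfl⟩ := (Ext.mk₀_bijective _ _).2 y
  rw [Ext.mk₀_comp_mk₀] at hy
  exact ⟨s.hom, congrArg ModuleCat.Hom.hom ((Ext.mk₀_bijective _ _).1 hy)⟩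

end IsShortExact

theorem extVanishes_of_projective [Module.Projective R A] (n : ℕ) :
    ExtVanishes R (n + 1) A B := by
  have : Projective (ModuleCat.of R A) := (IsProjective.iff_projective A).1 inferInstance
  exact subsingleton_of_forall_eq 0 Ext.eq_zero_of_projective

theorem extVanishes_one_of_forall_split (hsplit : ∀ (E : ModuleCat.{0} R) (j : B →ₗ[R] E)
    (q : E →ₗ[R] C), IsShortExact j q → ∃ s : C →ₗ[R] E, q ∘ₗ s = LinearMap.id) :
    ExtVanishes R 1 C B := by
  have hExt : ExtSplits (ModuleCat.of R C) (ModuleCat.of R B) := fun E j q w hjq => by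
    obtain ⟨s, hs⟩ := hsplit E j.hom q.hom ⟨hjq.moduleCat_injective_f,
      hjq.moduleCat_surjective_g, (ShortComplex.ShortExact.moduleCat_exact_iff_function_exact _).1
        hjq.exact⟩
    exact ⟨ModuleCat.ofHom s, ModuleCat.hom_ext hs⟩
  have h := (isShortExact_subtype_ker (Finsupp.linearCombination_id_surjective R C)).shortExact
  refine subsingleton_of_forall_eq 0 fun x => ?_
  obtain ⟨y, rfl⟩ := Ext.contravariant_sequence_exact₃ h (.of R B) x
    ((extVanishes_of_projective 0).elim _ _) (add_zero 1)
  obtain ⟨t, rfl⟩ := (Ext.mk₀_bijective _ _).2 y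
  obtain ⟨u, rfl⟩ := hExt.exists_extension h t
  rw [← Ext.mk₀_comp_mk₀]
  exact h.extClass_comp_assoc _

end ExtVanishing

/-! ### Rigidity of bricks -/

section Filtrations

/-- `V` has a filtration of length `n` whose subquotients are all isomorphic to `B`. -/
def IsFilteredBy (R : Type) [Ring R] (B : Type) [AddCommGroup B] [Module R B] :
    ℕ → ModuleCat.{0} R → Prop
  | 0, V => Subsingleton V
  | n + 1, V => ∃ (Q : ModuleCat.{0} R) (i : B →ₗ[R] V) (p : V →ₗ[R] Q),
      IsShortExact i p ∧ IsFilteredBy R B n Q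

variable {B : Type} [AddCommGroup B] [Module R B] {n : ℕ} {V W : ModuleCat.{0} R}

theorem IsFilteredBy.of_equiv (h : IsFilteredBy R B n V) (e : V ≃ₗ[R] W) :
    IsFilteredBy R B n W := by
  cases n with
  | zero =>
    have : Subsingleton V := h
    exact e.symm.subsingleton
  | succ n =>
    obtain ⟨Q, i, p, hip, hQ⟩ := h
    refine ⟨Q, e.toLinearMap ∘ₗ i, p ∘ₗ e.symm.toLinearMap, ⟨e.injective.comp hip.injective,
      hip.surjective.comp e.symm.surjective, fun x => ?_⟩, hQ⟩
    rw [LinearMap.comp_apply, hip.exact]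
    exact exists_congr fun b => e.toEquiv.eq_symm_apply

theorem IsShortExact.quotient_range {A M Q C : Type} [AddCommGroup A] [Module R A]
    [AddCommGroup M] [Module R M] [AddCommGroup Q] [Module R Q] [AddCommGroup C] [Module R C]
    {i : A →ₗ[R] M} {p : M →ₗ[R] Q} (h : IsShortExact i p) {φ : C →ₗ[R] M}
    (hφ : Function.Injective (p ∘ₗ φ)) :
    IsShortExact ((LinearMap.range φ).mkQ ∘ₗ i) ((LinearMap.range φ).mapQ
      (LinearMap.range (p ∘ₗ φ)) p (by rintro _ ⟨c, rfl⟩; exact ⟨c, rfl⟩)) := by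
  refine ⟨(injective_iff_map_eq_zero _).2 fun a ha => ?_, fun z => ?_, fun z => ?_⟩
  · obtain ⟨c, hc⟩ := (Submodule.Quotient.mk_eq_zero _).1 ha
    have hc0 : c = 0 := hφ (by
      rw [LinearMap.comp_apply, hc, h.exact.apply_apply_eq_zero, map_zero])
    exact h.injective (by rw [← hc, hc0, map_zero, map_zero])
  · obtain ⟨y, rfl⟩ := Submodule.mkQ_surjective _ z
    obtain ⟨x, rfl⟩ := h.surjective y
    exact ⟨Submodule.Quotient.mk x, rfl⟩
  · obtain ⟨x, rfl⟩ := Submodule.mkQ_surjective _ z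
    constructor
    · intro hx
      obtain ⟨c, hc⟩ := (Submodule.Quotient.mk_eq_zero _).1 hx
      obtain ⟨a, ha⟩ := (h.exact (x - φ c)).1 (by rw [map_sub, ← hc]; exact sub_self _)
      refine ⟨a, (Submodule.Quotient.eq _).2 ?_⟩
      rw [ha, sub_sub_cancel_left]
      exact neg_mem ⟨c, rfl⟩
    · rintro ⟨a, ha⟩
      rw [← ha]
      exact congrArg Submodule.Quotient.mk (h.exact.apply_apply_eq_zero a)

theorem IsFilteredBy.quotient_range (hB : IsBrick R B) (h : IsFilteredBy R B n V)
    {φ : B →ₗ[R] V} (hφ : φ ≠ 0) : Function.Injective φ ∧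
      ∃ m, n = m + 1 ∧ IsFilteredBy R B m (.of R (V ⧸ LinearMap.range φ)) := by
  induction n generalizing V with
  | zero =>
    have : Subsingleton V := h
    exact (hφ (Subsingleton.elim _ _)).elim
  | succ n ih =>
    obtain ⟨Q, i, p, hip, hQ⟩ := h
    by_cases hpφ : p ∘ₗ φ = 0
    · obtain ⟨t, rfl⟩ : ∃ t : B →ₗ[R] B, i ∘ₗ t = φ := by
        let e := LinearEquiv.ofInjective i hip.injective
        refine ⟨e.symm ∘ₗ φ.codRestrict (LinearMap.range i)
          fun b => (hip.exact _).1 (LinearMap.congr_fun hpφ b), LinearMap.ext fun b => ?_⟩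
        exact congrArg Subtype.val (e.apply_symm_apply _)
      have ht := (hB.eq_zero_or_bijective t).resolve_left fun h0 => hφ (by
        rw [h0, LinearMap.comp_zero])
      refine ⟨hip.injective.comp ht.1, n, rfl, ?_⟩
      rw [LinearMap.range_comp_of_range_eq_top _ (LinearMap.range_eq_top.2 ht.2),
        ← LinearMap.exact_iff.1 hip.exact]
      exact hQ.of_equiv (p.quotKerEquivOfSurjective hip.surjective).symm
    · obtain ⟨hinj, m, rfl, hm⟩ := ih hQ hpφ
      exact ⟨Function.Injective.of_comp (f := p) hinj, m + 1, rfl, _, _, _,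
        hip.quotient_range hinj, hm⟩

theorem IsFilteredBy.of_injective (hB : IsBrick R B) (h : IsFilteredBy R B n V)
    {j : W →ₗ[R] V} (hj : Function.Injective j) (hW : MemTorsionClass R B W) :
    ∃ m, IsFilteredBy R B m W := by
  induction n generalizing V W with
  | zero =>
    have : Subsingleton V := h
    exact ⟨0, hj.subsingleton⟩
  | succ n ih =>
    rcases subsingleton_or_nontrivial W with hW0 | _
    · exact ⟨0, hW0⟩
    obtain ⟨t, ht⟩ := hW.exists_ne_zero
    have hjt : j ∘ₗ t ≠ 0 := fun h0 => ht ((LinearMap.cancel_left hj).1 (by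
      rw [h0, LinearMap.comp_zero]))
    obtain ⟨hinj, m, hm, hQ⟩ := h.quotient_range hB hjt
    obtain rfl : n = m := Nat.succ_injective hm
    have hcomap : LinearMap.range t = (LinearMap.range (j ∘ₗ t)).comap j := by
      rw [LinearMap.range_comp, Submodule.comap_map_eq_of_injective hj]
    obtain ⟨k, hk⟩ := ih (W := .of R (W ⧸ LinearMap.range t)) hQ
      (j := (LinearMap.range t).mapQ _ j hcomap.le)
      (LinearMap.ker_eq_bot.1 (Submodule.ker_liftQ_eq_bot _ _ _ (by
        rw [LinearMap.ker_comp, Submodule.ker_mkQ, hcomap])))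
      (hW.of_generates (Generates.refl.of_surjective (Submodule.mkQ_surjective _)))
    exact ⟨k + 1, _, t, _, isShortExact_mkQ_range (Function.Injective.of_comp (f := j) hinj), hk⟩

theorem IsFilteredBy.extVanishes_two (hB : ExtVanishes R 2 B B) (h : IsFilteredBy R B n V) :
    ExtVanishes R 2 V B := by
  induction n generalizing V with
  | zero =>
    have : Subsingleton V := h
    have : Module.Projective R V := .of_lifting_property'' fun f _ => ⟨0, Subsingleton.elim _ _⟩
    exact extVanishes_of_projective 1
  | succ n ih =>
    obtain ⟨Q, i, p, hip, hQ⟩ := h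
    exact hip.extVanishes_from_middle hB (ih hQ)

theorem IsFilteredBy.extVanishes_one_self (hB : ExtVanishes R 2 B B) (h : IsFilteredBy R B n V)
    [Nontrivial V] (hV : ExtVanishes R 1 V B) : ExtVanishes R 1 B B := by
  cases n with
  | zero => exact (not_subsingleton V h).elim
  | succ n =>
    obtain ⟨Q, i, p, hip, hQ⟩ := h
    exact hip.extVanishes_from_left hV (hQ.extVanishes_two hB)

theorem IsFilteredBy.self : IsFilteredBy R B 1 (.of R B) :=
  ⟨.of R PUnit, LinearMap.id, 0, ⟨Function.injective_id, fun _ => ⟨0, rfl⟩,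
    fun x => ⟨fun _ => ⟨x, rfl⟩, fun _ => rfl⟩⟩, inferInstanceAs (Subsingleton PUnit)⟩

end Filtrations

section BrickRigidity

variable {B X : Type} [AddCommGroup B] [Module R B] [AddCommGroup X] [Module R X]

theorem IsTauRigid.liftsAlong (hX : IsTauRigid R X) (hXB : Generates R X B) {E V : Type}
    [AddCommGroup E] [Module R E] [AddCommGroup V] [Module R V] {j : B →ₗ[R] E} {q : E →ₗ[R] V}
    (h : IsShortExact j q) : LiftsAlong q X := by
  obtain ⟨P₁, P₀, f, g, hfg, hf⟩ := hX
  have := hfg.projective_left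
  have := hfg.projective_right
  refine liftsAlong_of_extendsAlong_ker hfg.exact hfg.surjective h.surjective
    ((hf.of_generates hXB).of_surjective
      (q := j.codRestrict (LinearMap.ker q) h.exact.apply_apply_eq_zero) ?_)
  rintro ⟨x, hx⟩
  obtain ⟨b, rfl⟩ := (h.exact x).1 hx
  exact ⟨b, rfl⟩

theorem IsFilteredBy.exists_ker_lt (hB : IsBrick R B) (hX : IsTauRigid R X)
    (hXB : Generates R X B) (hBX : MemTorsionClass R B X) {n : ℕ} {V : ModuleCat.{0} R}
    (hV : IsFilteredBy R B n V) (hExt : ¬ ExtVanishes R 1 V B) {π : X →ₗ[R] V}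
    (hπ : Function.Surjective π) :
    ∃ (m : ℕ) (W : ModuleCat.{0} R) (ρ : X →ₗ[R] W), Function.Surjective ρ ∧
      IsFilteredBy R B m W ∧ LinearMap.ker ρ < LinearMap.ker π := by
  obtain ⟨E, j, q, hjq, hnonsplit⟩ : ∃ (E : ModuleCat.{0} R) (j : B →ₗ[R] E) (q : E →ₗ[R] V),
      IsShortExact j q ∧ ¬ ∃ s : V →ₗ[R] E, q ∘ₗ s = LinearMap.id := by
    by_contra! hsplit
    exact hExt (extVanishes_one_of_forall_split fun E j q hjq => by
      simpa using hsplit E j q hjq)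
  obtain ⟨s, rfl⟩ := hX.liftsAlong hXB hjq π
  have hE : IsFilteredBy R B (n + 1) E := ⟨V, j, q, hjq, hV⟩
  obtain ⟨m, hm⟩ := hE.of_injective hB (W := .of R (LinearMap.range s))
    (LinearMap.range s).injective_subtype
    (hBX.of_generates (Generates.refl.of_surjective s.surjective_rangeRestrict))
  refine ⟨m, _, s.rangeRestrict, s.surjective_rangeRestrict, hm, ?_⟩
  rw [LinearMap.ker_rangeRestrict]
  refine (LinearMap.ker_le_ker_comp s q).lt_of_not_ge fun hle => hnonsplit ?_
  obtain ⟨σ, hσ⟩ := exists_comp_eq_of_ker_le hπ s hle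
  exact ⟨σ, (LinearMap.cancel_right hπ).1 (by rw [LinearMap.comp_assoc, hσ, LinearMap.id_comp])⟩

-- If `Ext¹(B, B) ≠ 0`, then every nonzero `B`-filtered `V` has a nonsplit extension by `B`, so the
-- `B`-filtered quotients of the τ-rigid module `X` have ever smaller kernels; but `X` is Artinian.
theorem IsBrick.extVanishes_one [IsArtinAlgebra R] (hR : HasFinitelyManyTauRigidGen R)
    [Module.Finite R B] (hB : IsBrick R B) (hExt : ExtVanishes R 2 B B) :
    ExtVanishes R 1 B B := by
  by_contra hne
  obtain ⟨X, _, hX, hXB, hBX⟩ := hR.exists_memTorsionClass B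
  obtain ⟨t, ht⟩ : ∃ t : X →ₗ[R] B, t ≠ 0 := by
    by_contra! h0
    have := hB.nontrivial
    exact one_ne_zero (α := Module.End R B) (hXB.homVanishes h0 _)
  obtain ⟨⟨V, π⟩, ⟨n, hπ, hV, htop⟩, hmin⟩ := exists_minimalFor_of_wellFoundedLT
    (fun V : Σ V : ModuleCat.{0} R, X →ₗ[R] V.1 => ∃ n, Function.Surjective V.2 ∧
      IsFilteredBy R B n V.1 ∧ LinearMap.ker V.2 < ⊤) (fun V => LinearMap.ker V.2)
    ⟨⟨.of R B, t⟩, 1, hB.surjective_of_ne_zero hBX ht, .self,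
      lt_top_iff_ne_top.2 (mt LinearMap.ker_eq_top.1 ht)⟩
  have : Nontrivial V := by
    obtain ⟨x, -, hx⟩ := SetLike.exists_of_lt htop
    exact nontrivial_of_ne (π x) 0 hx
  obtain ⟨m, W, ρ, hρ, hW, hlt⟩ := hV.exists_ker_lt hB hX hXB hBX
    (fun h => hne (hV.extVanishes_one_self hExt h)) hπ
  exact hlt.not_ge (hmin (j := ⟨W, ρ⟩) ⟨m, hρ, hW, hlt.trans htop⟩ hlt.le)

end BrickRigidity

/-! ### Indecomposable modules -/

section Indecomposable

/-- `M` is an indecomposable module. Unlike `IsIndecMod`, this is phrased for unbundled modules,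
in terms of pairs of complementary submodules. -/
structure IsIndecomposable (R : Type) [Ring R] (M : Type*) [AddCommGroup M] [Module R M] :
    Prop where
  nontrivial : Nontrivial M
  eq_bot_or_eq_bot {A B : Submodule R M} (h : IsCompl A B) : A = ⊥ ∨ B = ⊥

variable {M : Type} [AddCommGroup M] [Module R M]

theorem IsIndecMod.isIndecomposable {M : ModCat R} (h : IsIndecMod M) : IsIndecomposable R M := by
  refine ⟨not_subsingleton_iff_nontrivial.1 fun _ => h.1 (ModuleCat.isZero_of_subsingleton M),
    fun {A B} hAB => ?_⟩
  refine (h.2 (.of R A) (.of R B) ⟨((Submodule.prodEquivOfIsCompl A B hAB).symm.trans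
    (ModuleCat.biprodIsoProd (.of R A) (.of R B)).toLinearEquiv.symm).toModuleIso⟩).imp ?_ ?_
  all_goals
    exact fun h0 => Submodule.subsingleton_iff_eq_bot.1 (ModuleCat.subsingleton_of_isZero h0)

theorem IsIndecomposable.injective_of_comp_eq_id {C : Type*} [AddCommGroup C] [Module R C]
    [Nontrivial C] (hM : IsIndecomposable R M) {s : C →ₗ[R] M} {r : M →ₗ[R] C}
    (h : r ∘ₗ s = LinearMap.id) : Function.Injective r := by
  have hrs (c : C) : r (s c) = c := LinearMap.congr_fun h c
  have hidem : IsIdempotentElem (s ∘ₗ r : Module.End R M) :=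
    LinearMap.ext fun x => congrArg s (hrs (r x))
  rcases hM.eq_bot_or_eq_bot (LinearMap.IsIdempotentElem.isCompl hidem) with h0 | h0
  · obtain ⟨c, hc⟩ := exists_ne (0 : C)
    have hc0 : s (r (s c)) = 0 := LinearMap.congr_fun (LinearMap.range_eq_bot.1 h0) (s c)
    exact (hc (by rw [← hrs c, ← congrArg r (congrArg s (hrs c)), hc0, map_zero])).elim
  · exact Function.Injective.of_comp (f := s) (LinearMap.ker_eq_bot.1 h0)

theorem IsIndecomposable.isNilpotent_or_bijective [IsArtinian R M] [IsNoetherian R M]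
    (hM : IsIndecomposable R M) (φ : Module.End R M) : IsNilpotent φ ∨ Function.Bijective φ := by
  obtain ⟨n, hn, hpos⟩ :=
    (φ.eventually_isCompl_ker_pow_range_pow.and (Filter.eventually_gt_atTop 0)).exists
  refine (hM.eq_bot_or_eq_bot hn).symm.imp (fun h => ⟨n, LinearMap.range_eq_bot.1 h⟩) fun h => ?_
  obtain ⟨m, rfl⟩ := Nat.exists_eq_succ_of_ne_zero hpos.ne'
  refine IsArtinian.bijective_of_injective_endomorphism φ
    (Function.Injective.of_comp (f := φ ^ m) ?_)
  rw [← Module.End.coe_mul, ← pow_succ]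
  exact LinearMap.ker_eq_bot.1 h

theorem IsIndecomposable.exists_comp_self_eq_zero [IsArtinian R M] [IsNoetherian R M]
    (hM : IsIndecomposable R M) {ψ : Module.End R M} (hψ : ψ ≠ 0) (hbij : ¬ Function.Bijective ψ) :
    ∃ χ : M →ₗ[R] M, χ ≠ 0 ∧ χ ∘ₗ χ = 0 ∧ LinearMap.range χ ≤ LinearMap.range ψ ∧
      LinearMap.ker ψ ≤ LinearMap.ker χ := by
  have := hM.nontrivial
  have hnil : IsNilpotent ψ := (hM.isNilpotent_or_bijective ψ).resolve_right hbij
  obtain ⟨n, hn⟩ : ∃ n, nilpotencyClass ψ = n + 1 + 1 :=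
    Nat.exists_eq_add_of_le' (lt_of_le_of_ne (pos_nilpotencyClass_iff.2 hnil)
      (Ne.symm (mt nilpotencyClass_eq_one.1 hψ)))
  obtain ⟨hzero, hne⟩ := nilpotencyClass_eq_succ_iff.1 hn
  refine ⟨ψ ^ (n + 1), hne, ?_, ?_, ?_⟩
  · rw [← Module.End.mul_eq_comp, ← pow_add, show n + 1 + (n + 1) = n + 1 + 1 + n by omega,
      pow_add, hzero, zero_mul]
  · rw [pow_succ']
    exact LinearMap.range_comp_le_range _ _
  · rw [pow_succ]
    exact LinearMap.ker_le_ker_comp _ _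

theorem exists_isIndecomposable_retract [IsArtinian R M] {D : Type*} [AddMonoid D]
    (Φ : Module.End R M →+ D) (hΦ : Φ LinearMap.id ≠ 0) :
    ∃ (C : ModuleCat.{0} R) (i : C →ₗ[R] M) (r : M →ₗ[R] C), r ∘ₗ i = LinearMap.id ∧
      Φ (i ∘ₗ r) ≠ 0 ∧ IsIndecomposable R C := by
  obtain ⟨⟨C, i, r⟩, ⟨hri, hne⟩, hmin⟩ := exists_minimalFor_of_wellFoundedLT
    (fun S : Σ C : ModuleCat.{0} R, (C →ₗ[R] M) × (M →ₗ[R] C) =>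
      S.2.2 ∘ₗ S.2.1 = LinearMap.id ∧ Φ (S.2.1 ∘ₗ S.2.2) ≠ 0)
    (fun S => LinearMap.range S.2.1) ⟨⟨.of R M, LinearMap.id, LinearMap.id⟩, rfl, hΦ⟩
  have hri' (c : C) : r (i c) = c := LinearMap.congr_fun hri c
  have eq_top {A B : Submodule R C} (h : IsCompl A B)
      (hA : Φ ((i ∘ₗ A.subtype) ∘ₗ (A.projectionOnto B h ∘ₗ r)) ≠ 0) : A = ⊤ := by
    refine top_unique fun c _ => ?_
    obtain ⟨a, ha⟩ := hmin (j := ⟨.of R A, i ∘ₗ A.subtype, A.projectionOnto B h ∘ₗ r⟩)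
      ⟨LinearMap.ext fun a => by simp [hri'], hA⟩ (LinearMap.range_comp_le_range _ _) ⟨c, rfl⟩
    rw [← hri' c, ← ha]
    exact (hri' a).symm ▸ a.2
  refine ⟨C, i, r, hri, hne, not_subsingleton_iff_nontrivial.1 fun _ => hne ?_, fun {A B} h => ?_⟩
  · rw [Subsingleton.elim r 0, LinearMap.comp_zero]
    exact map_zero Φ
  · by_contra! hAB
    have hsum : i ∘ₗ r = (i ∘ₗ A.subtype) ∘ₗ (A.projectionOnto B h ∘ₗ r) +
        (i ∘ₗ B.subtype) ∘ₗ (B.projectionOnto A h.symm ∘ₗ r) := LinearMap.ext fun x =>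
      (congrArg i (Submodule.projection_add_projection_eq_self h (r x)).symm).trans (map_add i _ _)
    have hA := of_not_not fun hA => hAB.2 (h.disjoint.eq_bot_of_ge (eq_top h hA ▸ le_top))
    have hB := of_not_not fun hB => hAB.1 (h.disjoint.eq_bot_of_le (eq_top h.symm hB ▸ le_top))
    exact hne (by rw [hsum]; exact (map_add Φ _ _).trans (by rw [hA, hB, add_zero]))

end Indecomposable

/-! ### Split torsion pairs -/

section SplitTorsionPair

/-- Every homomorphism from `M` to a module in `Y` vanishes, i.e. `M` is a torsion module for the
torsion pair with torsion-free class `Y`. -/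
def IsTorsion (Y : ModuleCat.{0} R → Prop) (M : Type*) [AddCommGroup M] [Module R M] : Prop :=
  ∀ N : ModuleCat.{0} R, Y N → HomVanishes R M N

/-- `Y` is the torsion-free class of a split torsion pair of finitely generated modules; it
contains `R` and its members have projective dimension at most one. -/
structure IsSplitTorsionFreeClass (Y : ModuleCat.{0} R → Prop) : Prop where
  of_equiv {M N : ModuleCat.{0} R} (e : M ≃ₗ[R] N) (h : Y M) : Y N
  self_mem : Y (.of R R)
  exists_isCompl (M : ModuleCat.{0} R) [Module.Finite R M] :
    ∃ A B : Submodule R M, IsCompl A B ∧ Y (.of R A) ∧ IsTorsion Y B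
  exists_projective_ker {M : ModuleCat.{0} R} [Module.Finite R M] (h : Y M) :
    ∃ (n : ℕ) (π : (Fin n → R) →ₗ[R] M),
      Function.Surjective π ∧ Module.Projective R (LinearMap.ker π)

variable {Y : ModuleCat.{0} R → Prop} {M C Z : Type} [AddCommGroup M] [Module R M]
  [AddCommGroup C] [Module R C] [AddCommGroup Z] [Module R Z]

namespace IsSplitTorsionFreeClass

theorem mem_or_isTorsion [Module.Finite R M] (hY : IsSplitTorsionFreeClass Y)
    (hM : IsIndecomposable R M) : Y (.of R M) ∨ IsTorsion Y M := by
  have : Module.Finite R (ModuleCat.of R M) := ‹_›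
  obtain ⟨A, B, hAB, hA, hB⟩ := hY.exists_isCompl (.of R M)
  rcases hM.eq_bot_or_eq_bot hAB with rfl | rfl
  · obtain rfl := eq_top_of_bot_isCompl hAB
    exact .inr fun N hN => (hB N hN).of_surjective Submodule.topEquiv.surjective
  · obtain rfl := eq_top_of_isCompl_bot hAB
    exact .inl (hY.of_equiv Submodule.topEquiv hA)

theorem extVanishes_two_of_mem [Module.Finite R M] (hY : IsSplitTorsionFreeClass Y)
    (hM : Y (.of R M)) : ExtVanishes R 2 M C := by
  have : Module.Finite R (ModuleCat.of R M) := ‹_›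
  obtain ⟨n, π, hπ, _⟩ := hY.exists_projective_ker hM
  exact (isShortExact_subtype_ker hπ).extVanishes_from_right (extVanishes_of_projective 0)
    (extVanishes_of_projective 1)

theorem exists_section_of_isTorsion {E : ModuleCat.{0} R} [Module.Finite R E]
    (hY : IsSplitTorsionFreeClass Y) (hM : IsTorsion Y M) {ι : Type*} {k : Z →ₗ[R] ι → R}
    (hk : Function.Injective k) {j : M →ₗ[R] E} {q : E →ₗ[R] Z} (hjq : IsShortExact j q) :
    ∃ s : Z →ₗ[R] E, q ∘ₗ s = LinearMap.id := by
  obtain ⟨A, B, hAB, hA, hB⟩ := hY.exists_isCompl E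
  have hqB (b : B) : q b = 0 :=
    LinearMap.congr_fun (((hB _ hY.self_mem).pi_right ι).of_injective hk (q ∘ₗ B.subtype)) b
  obtain ⟨s, hs⟩ := exists_comp_eq_of_exact hjq.exact hjq.surjective (A.projectionOnto B hAB)
    (hM _ hA _)
  refine ⟨A.subtype ∘ₗ s, (LinearMap.cancel_right hjq.surjective).1 (LinearMap.ext fun x => ?_)⟩
  calc q (s (q x)) = q (A.projectionOnto B hAB x) + q (B.projectionOnto A hAB.symm x) := by
        rw [hqB, add_zero]
        exact congrArg (fun a : A => q a) (LinearMap.congr_fun hs x)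
    _ = q x := by
        rw [← map_add]
        exact congrArg q (Submodule.projection_add_projection_eq_self hAB x)

theorem extVanishes_two_of_isTorsion [IsNoetherianRing R] [Module.Finite R M] [Module.Finite R C]
    (hY : IsSplitTorsionFreeClass Y) (hM : IsTorsion Y M) : ExtVanishes R 2 C M := by
  obtain ⟨n, π, hπ⟩ := Module.Finite.exists_fin' R C
  refine (isShortExact_subtype_ker hπ).extVanishes_from_right
    (extVanishes_one_of_forall_split fun E j q hjq => ?_) (extVanishes_of_projective 1)
  have : Module.Finite R E := .of_exact hjq.exact hjq.surjective
  exact hY.exists_section_of_isTorsion hM (LinearMap.ker π).injective_subtype hjq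

end IsSplitTorsionFreeClass

end SplitTorsionPair

/-! ### Indecomposable modules are bricks -/

section IndecomposableBrick

variable {Y : ModuleCat.{0} R → Prop} {M C : Type} [AddCommGroup M] [Module R M]
  [AddCommGroup C] [Module R C] {φ : M →ₗ[R] M}

theorem not_surjective_of_comp_self_eq_zero (h0 : φ ≠ 0) (hφ : φ ∘ₗ φ = 0) :
    ¬ Function.Surjective φ :=
  fun h => h0 ((LinearMap.cancel_right h).1 (by rw [hφ, LinearMap.zero_comp]))

theorem not_injective_of_comp_self_eq_zero (h0 : φ ≠ 0) (hφ : φ ∘ₗ φ = 0) :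
    ¬ Function.Injective φ :=
  fun h => h0 ((LinearMap.cancel_left h).1 (by rw [hφ, LinearMap.comp_zero]))

theorem IsIndecomposable.exists_comp_self_eq_zero_of_not_isBrick [IsArtinian R M]
    [IsNoetherian R M] (hM : IsIndecomposable R M) (hbrick : ¬ IsBrick R M) :
    ∃ χ : M →ₗ[R] M, χ ≠ 0 ∧ χ ∘ₗ χ = 0 := by
  obtain ⟨ψ, hψ, hbij⟩ : ∃ ψ : M →ₗ[R] M, ψ ≠ 0 ∧ ¬ Function.Bijective ψ := by
    by_contra! h
    exact hbrick ⟨hM.nontrivial, fun t => or_iff_not_imp_left.2 (h t)⟩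
  obtain ⟨χ, hχ, hχχ, -, -⟩ := hM.exists_comp_self_eq_zero hψ hbij
  exact ⟨χ, hχ, hχχ⟩

theorem IsIndecomposable.exists_minimal_range [IsArtinian R M] [IsNoetherian R M]
    (hM : IsIndecomposable R M) (hbrick : ¬ IsBrick R M) :
    ∃ φ : M →ₗ[R] M, φ ≠ 0 ∧ φ ∘ₗ φ = 0 ∧ ∀ ψ : M →ₗ[R] M, ψ ≠ 0 →
      LinearMap.range ψ ≤ LinearMap.range φ → LinearMap.range φ ≤ LinearMap.range ψ := by
  obtain ⟨φ, ⟨hφ, hφφ⟩, hmin⟩ := exists_minimalFor_of_wellFoundedLT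
    (fun φ : M →ₗ[R] M => φ ≠ 0 ∧ φ ∘ₗ φ = 0) (LinearMap.range ·)
    (hM.exists_comp_self_eq_zero_of_not_isBrick hbrick)
  refine ⟨φ, hφ, hφφ, fun ψ hψ hle => ?_⟩
  obtain ⟨χ, hχ, hχχ, hχψ, -⟩ := hM.exists_comp_self_eq_zero hψ fun hbij =>
    not_surjective_of_comp_self_eq_zero hφ hφφ
      (LinearMap.range_eq_top.1 (top_unique ((LinearMap.range_eq_top.2 hbij.2).ge.trans hle)))
  exact (hmin ⟨hχ, hχχ⟩ (hχψ.trans hle)).trans hχψ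

theorem IsIndecomposable.exists_maximal_ker [IsArtinian R M] [IsNoetherian R M]
    (hM : IsIndecomposable R M) (hbrick : ¬ IsBrick R M) :
    ∃ φ : M →ₗ[R] M, φ ≠ 0 ∧ φ ∘ₗ φ = 0 ∧ ∀ ψ : M →ₗ[R] M, ψ ≠ 0 →
      LinearMap.ker φ ≤ LinearMap.ker ψ → LinearMap.ker ψ ≤ LinearMap.ker φ := by
  obtain ⟨φ, ⟨hφ, hφφ⟩, hmax⟩ := exists_maximalFor_of_wellFoundedGT
    (fun φ : M →ₗ[R] M => φ ≠ 0 ∧ φ ∘ₗ φ = 0) (LinearMap.ker ·)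
    (hM.exists_comp_self_eq_zero_of_not_isBrick hbrick)
  refine ⟨φ, hφ, hφφ, fun ψ hψ hle => ?_⟩
  obtain ⟨χ, hχ, hχχ, -, hψχ⟩ := hM.exists_comp_self_eq_zero hψ fun hbij =>
    not_injective_of_comp_self_eq_zero hφ hφφ
      (LinearMap.ker_eq_bot.1 (bot_unique (hle.trans (LinearMap.ker_eq_bot.2 hbij.1).le)))
  exact hψχ.trans (hmax ⟨hχ, hχχ⟩ (hle.trans hψχ))

theorem exists_surjective_of_minimal_range [IsArtinian R M] (h0 : φ ≠ 0) (hφφ : φ ∘ₗ φ = 0)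
    (hmin : ∀ ψ : M →ₗ[R] M, ψ ≠ 0 →
      LinearMap.range ψ ≤ LinearMap.range φ → LinearMap.range φ ≤ LinearMap.range ψ) :
    ∃ (C : ModuleCat.{0} R) (i : C →ₗ[R] M ⧸ LinearMap.range φ)
      (r : (M ⧸ LinearMap.range φ) →ₗ[R] C) (u : C →ₗ[R] LinearMap.range φ),
      r ∘ₗ i = LinearMap.id ∧ IsIndecomposable R C ∧ Function.Surjective u := by
  let φ' : (M ⧸ LinearMap.range φ) →ₗ[R] LinearMap.range φ :=
    (LinearMap.range φ).liftQ φ.rangeRestrict (by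
      rw [LinearMap.ker_rangeRestrict]
      exact LinearMap.range_le_ker_iff.2 hφφ)
  have hφ' : φ' ≠ 0 := fun h => h0 (LinearMap.ext fun x =>
    congrArg Subtype.val (LinearMap.congr_fun h (Submodule.Quotient.mk x)))
  obtain ⟨C, i, r, hri, hne, hC⟩ := exists_isIndecomposable_retract
    (AddMonoidHom.mk' (fun e => φ' ∘ₗ e) fun e e' => LinearMap.comp_add e e' φ') hφ'
  have hr : Function.Surjective (r ∘ₗ (LinearMap.range φ).mkQ) :=
    (LinearMap.surjective_of_comp_eq_id i r hri).comp (Submodule.mkQ_surjective _)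
  have hu : φ' ∘ₗ i ≠ 0 := fun h => hne (by
    change (φ' ∘ₗ i) ∘ₗ r = 0
    rw [h, LinearMap.zero_comp])
  refine ⟨C, i, r, φ' ∘ₗ i, hri, hC, fun y => ?_⟩
  obtain ⟨x, hx⟩ := hmin ((LinearMap.range φ).subtype ∘ₗ (φ' ∘ₗ i) ∘ₗ r ∘ₗ (LinearMap.range φ).mkQ)
    (fun h => hu ((LinearMap.cancel_right hr).1 ((LinearMap.cancel_left
      (LinearMap.range φ).injective_subtype).1 (by simpa using h))))
    (by rintro _ ⟨x, rfl⟩; exact Subtype.prop _) y.2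
  exact ⟨_, Subtype.ext hx⟩

theorem exists_injective_of_maximal_ker [IsArtinian R M] (h0 : φ ≠ 0)
    (hφφ : φ ∘ₗ φ = 0) (hmax : ∀ ψ : M →ₗ[R] M, ψ ≠ 0 →
      LinearMap.ker φ ≤ LinearMap.ker ψ → LinearMap.ker ψ ≤ LinearMap.ker φ) :
    ∃ (C : ModuleCat.{0} R) (i : C →ₗ[R] LinearMap.ker φ) (r : LinearMap.ker φ →ₗ[R] C)
      (w : LinearMap.range φ →ₗ[R] C),
      r ∘ₗ i = LinearMap.id ∧ IsIndecomposable R C ∧ Function.Injective w := by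
  let φ' : M →ₗ[R] LinearMap.ker φ := φ.codRestrict _ (LinearMap.congr_fun hφφ)
  have hφ' : φ' ≠ 0 := fun h => h0 (LinearMap.ext fun x =>
    congrArg Subtype.val (LinearMap.congr_fun h x))
  obtain ⟨C, i, r, hri, hne, hC⟩ := exists_isIndecomposable_retract
    (AddMonoidHom.mk' (fun e => e ∘ₗ φ') fun e e' => LinearMap.add_comp φ' e' e) hφ'
  refine ⟨C, i, r, r ∘ₗ Submodule.inclusion (LinearMap.range_le_ker_iff.2 hφφ), hri, hC,
    (injective_iff_map_eq_zero _).2 ?_⟩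
  rintro ⟨_, x, rfl⟩ hx
  refine Subtype.ext (hmax ((LinearMap.ker φ).subtype ∘ₗ (i ∘ₗ r) ∘ₗ φ')
    (fun h => hne ((LinearMap.cancel_left (LinearMap.ker φ).injective_subtype).1
      (by simpa using h))) (fun y hy => ?_) ?_)
  · have hy' : φ' y = 0 := Subtype.ext hy
    simp [hy']
  · exact congrArg (fun c => (i c : M)) hx |>.trans (by simp)

namespace IsSplitTorsionFreeClass

variable [IsArtinAlgebra R] [Module.Finite R M]

theorem isBrick_of_mem (hR : HasFinitelyManyTauRigidGen R) (hY : IsSplitTorsionFreeClass Y)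
    (hMY : Y (.of R M)) (hM : IsIndecomposable R M)
    (ih : ∀ C : ModuleCat.{0} R, Module.Finite R C → Module.length R C < Module.length R M →
      IsIndecomposable R C → IsBrick R C) : IsBrick R M := by
  by_contra hbrick
  obtain ⟨φ, h0, hφφ, hmin⟩ := hM.exists_minimal_range hbrick
  obtain ⟨C, i, r, u, hri, hC, hu⟩ := exists_surjective_of_minimal_range h0 hφφ hmin
  have hr : Function.Surjective r := LinearMap.surjective_of_comp_eq_id i r hri
  have hrange : LinearMap.range φ ≠ ⊥ := mt LinearMap.range_eq_bot.1 h0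
  have : Module.Finite R C := .of_surjective r hr
  have hCY : Y C := (hY.mem_or_isTorsion hC).resolve_right fun htors => hrange
    ((Submodule.eq_bot_iff _).2 fun y hy => by
      obtain ⟨c, hc⟩ := hu ⟨y, hy⟩
      have huc := LinearMap.congr_fun (htors _ hMY ((LinearMap.range φ).subtype ∘ₗ u)) c
      exact (congrArg Subtype.val hc).symm.trans huc)
  have hExtC : ExtVanishes R 1 C C := (ih C ‹_› ((Module.length_le_of_surjective r hr).trans_lt
    (Submodule.length_quotient_lt _ hrange)) hC).extVanishes_one hR (hY.extVanishes_two_of_mem hCY)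
  obtain ⟨s, hs⟩ := (isShortExact_subtype_mkQ (LinearMap.range φ)).liftsAlong
    ((isShortExact_subtype_ker hu).extVanishes_to_right hExtC (hY.extVanishes_two_of_mem hCY)) i
  have := hC.nontrivial
  have hinj : Function.Injective (r ∘ₗ (LinearMap.range φ).mkQ) :=
    hM.injective_of_comp_eq_id (s := s) (by rw [LinearMap.comp_assoc, hs, hri])
  exact hrange (by
    rw [← Submodule.ker_mkQ (LinearMap.range φ)]
    exact LinearMap.ker_eq_bot.2 (Function.Injective.of_comp (f := r) hinj))

theorem isBrick_of_isTorsion (hR : HasFinitelyManyTauRigidGen R)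
    (hY : IsSplitTorsionFreeClass Y) (hMY : IsTorsion Y M) (hM : IsIndecomposable R M)
    (ih : ∀ C : ModuleCat.{0} R, Module.Finite R C → Module.length R C < Module.length R M →
      IsIndecomposable R C → IsBrick R C) : IsBrick R M := by
  by_contra hbrick
  obtain ⟨φ, h0, hφφ, hmax⟩ := hM.exists_maximal_ker hbrick
  obtain ⟨C, i, r, w, hri, hC, hw⟩ := exists_injective_of_maximal_ker h0 hφφ hmax
  have hr : Function.Surjective r := LinearMap.surjective_of_comp_eq_id i r hri
  have : Module.Finite R C := .of_surjective r hr
  have hlt : Module.length R C < Module.length R M :=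
    (Module.length_le_of_surjective r hr).trans_lt
      (Submodule.length_lt (mt LinearMap.ker_eq_top.1 h0))
  have hCtors : IsTorsion Y C := (hY.mem_or_isTorsion hC).resolve_left fun hCY => h0
    (LinearMap.ext fun x => congrArg Subtype.val (hw ((LinearMap.congr_fun
      (hMY _ hCY (w ∘ₗ φ.rangeRestrict)) x).trans (map_zero w).symm)))
  have hExtC : ExtVanishes R 1 C C :=
    (ih C ‹_› hlt hC).extVanishes_one hR (hY.extVanishes_two_of_isTorsion hCtors)
  have hφ : IsShortExact (LinearMap.ker φ).subtype φ.rangeRestrict := by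
    rw [← LinearMap.ker_rangeRestrict φ]
    exact isShortExact_subtype_ker φ.surjective_rangeRestrict
  obtain ⟨s, hs⟩ := hφ.extendsAlong ((isShortExact_mkQ_range hw).extVanishes_from_left hExtC
    (hY.extVanishes_two_of_isTorsion hCtors)) r
  have := hC.nontrivial
  have hinj : Function.Injective s := hM.injective_of_comp_eq_id
    (s := (LinearMap.ker φ).subtype ∘ₗ i) (by rw [← LinearMap.comp_assoc, hs, hri])
  exact hlt.not_ge (Module.length_le_of_injective s hinj)

theorem isBrick_of_isIndecomposable (hR : HasFinitelyManyTauRigidGen R)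
    (hY : IsSplitTorsionFreeClass Y) (M : ModuleCat.{0} R) [Module.Finite R M]
    (hM : IsIndecomposable R M) : IsBrick R M :=
  (hY.mem_or_isTorsion hM).elim
    (fun hMY => hY.isBrick_of_mem hR hMY hM fun C _ _ hC => isBrick_of_isIndecomposable hR hY C hC)
    (fun hMY => hY.isBrick_of_isTorsion hR hMY hM fun C _ _ hC =>
      isBrick_of_isIndecomposable hR hY C hC)
termination_by Module.length R M

theorem isRepFiniteRing (hR : HasFinitelyManyTauRigidGen R) (hY : IsSplitTorsionFreeClass Y) :
    IsRepFiniteRing R := by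
  obtain ⟨n, F, hF⟩ := hR.exists_fin_isBrick
  refine ⟨n, F, fun M hfin hM => ?_⟩
  have : Module.Finite R M := hfin
  obtain ⟨i, ⟨e⟩⟩ := hF M (hY.isBrick_of_isIndecomposable hR M hM.isIndecomposable)
  exact ⟨i, ⟨e.toModuleIso⟩⟩

end IsSplitTorsionFreeClass

end IndecomposableBrick

/-! ### Tilting objects in hereditary abelian categories -/

section TiltingObject

attribute [local instance] Abelian.hasFiniteBiproducts

variable {H : Type u} [Category.{v} H] [Abelian H] {T X Y Z E : H}

/-- The abelian category `H` is hereditary: `Ext¹(Z, -)` preserves epimorphisms, in the sense that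
an extension of `Z` by `Y` lifts along any epimorphism `g : X ⟶ Y`. -/
class IsHereditary (H : Type u) [Category.{v} H] [Abelian H] : Prop where
  exists_lift {X Y Z E : H} (g : X ⟶ Y) [Epi g] {i : Y ⟶ E} {p : E ⟶ Z} {w : i ≫ p = 0}
    (hip : (ShortComplex.mk i p w).ShortExact) :
    ∃ (E' : H) (i' : X ⟶ E') (p' : E' ⟶ Z) (w' : i' ≫ p' = 0) (φ : E' ⟶ E),
      (ShortComplex.mk i' p' w').ShortExact ∧ i' ≫ φ = g ≫ i ∧ φ ≫ p = p'

/-- `T` has no self-extensions, and no nonzero object `X` satisfies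
`Hom(T, X) = 0 = Ext¹(T, X)`. -/
class IsTiltingObject (T : H) : Prop where
  extSplits_self : ExtSplits T T
  isZero (X : H) (hHom : ∀ f : T ⟶ X, f = 0) (hExt : ExtSplits T X) : IsZero X

theorem shortExact_kernel (p : X ⟶ Y) [Epi p] :
    (ShortComplex.mk (kernel.ι p) p (kernel.condition p)).ShortExact :=
  .mk' (ShortComplex.exact_kernel p) inferInstance ‹_›

theorem extSplits_of_forall_retraction (h : ∀ (E : H) (i : X ⟶ E) (p : E ⟶ T) (w : i ≫ p = 0),
    (ShortComplex.mk i p w).ShortExact → ∃ r : E ⟶ X, i ≫ r = 𝟙 X) : ExtSplits T X := by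
  intro E i p w hip
  obtain ⟨r, hr⟩ := h E i p w hip
  exact ⟨_, (ShortComplex.Splitting.ofExactOfRetraction _ hip.exact r hr hip.epi_g).s_g⟩

theorem ExtSplits.biproduct {ι : Type} [Finite ι] {F : ι → H} (h : ∀ j, ExtSplits T (F j)) :
    ExtSplits T (⨁ F) := by
  refine extSplits_of_forall_retraction fun E i p w hip => ?_
  choose r hr using fun j => (h j).exists_extension hip (biproduct.π F j)
  exact ⟨biproduct.lift r, biproduct.hom_ext _ _ fun j => by simp [hr]⟩

theorem ExtSplits.of_epi [IsHereditary H] (h : ExtSplits T X) (g : X ⟶ Y) [Epi g] :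
    ExtSplits T Y := fun E i p w hip => by
  obtain ⟨E', i', p', w', φ, hip', -, hφ⟩ := IsHereditary.exists_lift g hip
  obtain ⟨s, hs⟩ := h E' i' p' w' hip'
  exact ⟨s ≫ φ, by rw [Category.assoc, hφ, hs]⟩

theorem ExtSplits.of_shortExact (h : ExtSplits T Y) {i : X ⟶ Y} {p : Y ⟶ Z} {w : i ≫ p = 0}
    (hip : (ShortComplex.mk i p w).ShortExact)
    (hp : Function.Surjective (· ≫ p : (T ⟶ Y) → (T ⟶ Z))) : ExtSplits T X := by
  refine extSplits_of_forall_retraction fun E j q w' hjq => ?_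
  have := hip.mono_f
  have := hjq.epi_g
  obtain ⟨u, hu⟩ := h.exists_extension hjq i
  have hup : j ≫ u ≫ p = 0 := by rw [← Category.assoc, hu, w]
  obtain ⟨x, hx⟩ := hp (hjq.exact.desc (u ≫ p) hup)
  have hux : (u - q ≫ x) ≫ p = 0 := by
    rw [Preadditive.sub_comp, Category.assoc, show x ≫ p = _ from hx, sub_eq_zero]
    exact (hjq.exact.g_desc (u ≫ p) hup).symm
  refine ⟨hip.exact.lift (u - q ≫ x) hux, (cancel_mono i).1 ?_⟩
  rw [Category.assoc, show hip.exact.lift _ hux ≫ i = _ from hip.exact.lift_f _ hux,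
    Preadditive.comp_sub, hu, ← Category.assoc, w', zero_comp, sub_zero, Category.id_comp]

theorem IsTiltingObject.epi [IsHereditary H] [IsTiltingObject T] (hX : ExtSplits T X)
    (hY : ExtSplits T Y) (p : X ⟶ Y) (hp : Function.Surjective (· ≫ p : (T ⟶ X) → (T ⟶ Y))) :
    Epi p := by
  have hI : ExtSplits T (Abelian.image p) := hX.of_epi (Abelian.factorThruImage p)
  refine Preadditive.epi_of_isZero_cokernel p (IsTiltingObject.isZero (T := T) _ (fun f => ?_)
    (hY.of_epi (cokernel.π p)))
  obtain ⟨y, rfl⟩ := hI.exists_lift (shortExact_kernel (cokernel.π p)) f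
  obtain ⟨x, rfl⟩ := hp y
  simp

end TiltingObject

/-! ### The functor represented by a tilting object -/

section HomFunctor

attribute [local instance] Abelian.hasFiniteBiproducts

variable {H : Type u} [Category.{v} H] [Abelian H] {T X Y Z E : H}

/-- An identification of `R` with the opposite of the endomorphism ring of `T`. It makes `Hom(T, -)`
a functor to left `R`-modules. -/
class EndAction (R : Type) [Ring R] (T : H) where
  endEquiv : R ≃+* (End T)ᵐᵒᵖ

variable (R) (T)
variable [EndAction R T]

instance EndAction.module (X : H) : Module R (T ⟶ X) :=
  Module.compHom (T ⟶ X) (EndAction.endEquiv (R := R) (T := T)).toRingHom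

variable {T} in
theorem EndAction.smul_def (r : R) (x : T ⟶ X) :
    r • x = (EndAction.endEquiv (R := R) (T := T) r).unop ≫ x := rfl

/-- The `R`-linear map `Hom(T, f)`. -/
def homMap (f : X ⟶ Y) : (T ⟶ X) →ₗ[R] (T ⟶ Y) where
  toFun x := x ≫ f
  map_add' _ _ := Preadditive.add_comp ..
  map_smul' _ _ := Category.assoc ..

variable {T} in
@[simp]
theorem homMap_apply (f : X ⟶ Y) (x : T ⟶ X) : homMap R T f x = x ≫ f := rfl

theorem homMap_comp (f : X ⟶ Y) (g : Y ⟶ Z) :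
    homMap R T (f ≫ g) = homMap R T g ∘ₗ homMap R T f :=
  LinearMap.ext fun x => (Category.assoc x f g).symm

/-- The regular module `R` is `Hom(T, T)`. -/
def homSelfEquiv : R ≃ₗ[R] (T ⟶ T) where
  __ := EndAction.endEquiv.toAddEquiv.trans MulOpposite.opAddEquiv.symm
  map_smul' r s := congrArg MulOpposite.unop (map_mul EndAction.endEquiv r s)

/-- `Hom(T, Tⁿ)` is the free module `Rⁿ`. -/
def homPowerEquiv (n : ℕ) : (T ⟶ ⨁ fun _ : Fin n => T) ≃ₗ[R] (Fin n → R) where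
  __ := LinearMap.pi fun j =>
    (homSelfEquiv R T).symm.toLinearMap ∘ₗ homMap R T (biproduct.π (fun _ => T) j)
  invFun c := biproduct.lift fun j => homSelfEquiv R T (c j)
  left_inv y := biproduct.hom_ext _ _ fun j => by simp
  right_inv c := funext fun j => by simp

variable {R T}

theorem homPowerEquiv_symm_single {n : ℕ} (j : Fin n) (r : R) :
    (homPowerEquiv R T n).symm (Pi.single j r) = r • biproduct.ι (fun _ => T) j := by
  refine biproduct.hom_ext _ _ fun k => ?_
  rcases eq_or_ne j k with rfl | hjk
  · simp [homPowerEquiv, homSelfEquiv, EndAction.smul_def]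
  · simp [homPowerEquiv, EndAction.smul_def, biproduct.ι_π_ne _ hjk, Pi.single_eq_of_ne hjk.symm]

theorem linearMap_ext_power {n : ℕ} {N : Type*} [AddCommGroup N] [Module R N]
    {α β : (T ⟶ ⨁ fun _ : Fin n => T) →ₗ[R] N}
    (h : ∀ j, α (biproduct.ι (fun _ => T) j) = β (biproduct.ι (fun _ => T) j)) : α = β := by
  refine (LinearMap.cancel_right (homPowerEquiv R T n).symm.surjective).1
    (LinearMap.pi_ext fun j r => ?_)
  simp [homPowerEquiv_symm_single, h]

theorem exists_homMap_eq_of_power {n : ℕ} (α : (T ⟶ ⨁ fun _ : Fin n => T) →ₗ[R] (T ⟶ X)) :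
    ∃ a : (⨁ fun _ : Fin n => T) ⟶ X, homMap R T a = α :=
  ⟨biproduct.desc fun j => α (biproduct.ι (fun _ => T) j), linearMap_ext_power fun j => by simp⟩

theorem exact_homMap {i : X ⟶ E} {p : E ⟶ Z} {w : i ≫ p = 0}
    (h : (ShortComplex.mk i p w).ShortExact) :
    Function.Exact (homMap R T i) (homMap R T p) := by
  have := h.mono_f
  refine fun y => ⟨fun hy => ⟨h.exact.lift y hy, h.exact.lift_f y hy⟩, ?_⟩
  rintro ⟨x, rfl⟩
  rw [← LinearMap.comp_apply, ← homMap_comp, w]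
  exact comp_zero

theorem injective_homMap (i : X ⟶ Y) [Mono i] : Function.Injective (homMap R T i) :=
  fun _ _ => (cancel_mono i).1

theorem exists_surjective_homMap (X : H) [Module.Finite R (T ⟶ X)] :
    ∃ (n : ℕ) (p : (⨁ fun _ : Fin n => T) ⟶ X), Function.Surjective (homMap R T p) := by
  obtain ⟨n, q, hq⟩ := Module.Finite.exists_fin' R (T ⟶ X)
  obtain ⟨p, hp⟩ := exists_homMap_eq_of_power (q ∘ₗ (homPowerEquiv R T n).toLinearMap)
  refine ⟨n, p, ?_⟩
  rw [hp]
  exact hq.comp (homPowerEquiv R T n).surjective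

variable [IsTiltingObject T]

theorem IsTiltingObject.extSplits_power (n : ℕ) : ExtSplits T (⨁ fun _ : Fin n => T) :=
  .biproduct fun _ => IsTiltingObject.extSplits_self

variable [IsHereditary H]

theorem ExtSplits.exists_epi_power [Module.Finite R (T ⟶ X)] (hX : ExtSplits T X) :
    ∃ (n : ℕ) (p : (⨁ fun _ : Fin n => T) ⟶ X), Epi p ∧ Function.Surjective (homMap R T p) ∧
      ExtSplits T (kernel p) := by
  obtain ⟨n, p, hp⟩ := exists_surjective_homMap (R := R) (T := T) X
  have hn := IsTiltingObject.extSplits_power (T := T) n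
  have : Epi p := IsTiltingObject.epi hn hX p hp
  exact ⟨n, p, this, hp, hn.of_shortExact (shortExact_kernel p) hp⟩

theorem ExtSplits.exists_homMap_eq [∀ X : H, Module.Finite R (T ⟶ X)] (hX : ExtSplits T X)
    (α : (T ⟶ X) →ₗ[R] (T ⟶ Y)) : ∃ a : X ⟶ Y, homMap R T a = α := by
  obtain ⟨n, p, _, hp, hK⟩ := hX.exists_epi_power (R := R)
  obtain ⟨m, q, _, -, -⟩ := hK.exists_epi_power (R := R)
  obtain ⟨b, hb⟩ := exists_homMap_eq_of_power (α ∘ₗ homMap R T p)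
  have hqb : q ≫ kernel.ι p ≫ b = 0 := biproduct.hom_ext' _ _ fun j => by
    have hj := LinearMap.congr_fun hb (biproduct.ι (fun _ : Fin m => T) j ≫ q ≫ kernel.ι p)
    simpa using hj
  have hkb : kernel.ι p ≫ b = 0 := (cancel_epi q).1 (by rw [hqb, comp_zero])
  have hp_exact := (shortExact_kernel p).exact
  refine ⟨hp_exact.desc b hkb, (LinearMap.cancel_right hp).1 ?_⟩
  rw [← homMap_comp, ← hb]
  exact congrArg (homMap R T) (hp_exact.g_desc b hkb)

end HomFunctor

/-! ### The split torsion pair of a tilting object -/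

section ExactDiagrams

variable {A A₀ I C E M : Type*} [AddCommGroup A] [AddCommGroup A₀] [AddCommGroup I]
  [AddCommGroup C] [AddCommGroup E] [AddCommGroup M] [Module R A] [Module R A₀] [Module R I]
  [Module R C] [Module R E] [Module R M] {e : A →ₗ[R] I} {i : I →ₗ[R] A₀} {c : A₀ →ₗ[R] C}
  {j : A →ₗ[R] E} {φ : E →ₗ[R] A₀} {θ : A₀ →ₗ[R] M}

theorem range_sup_range_eq_top_of_exact (hic : Function.Exact i c)
    (hcφ : Function.Surjective (c ∘ₗ φ)) : LinearMap.range φ ⊔ LinearMap.range i = ⊤ := by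
  refine top_unique fun y _ => ?_
  obtain ⟨x, hx⟩ := hcφ (c y)
  obtain ⟨u, hu⟩ := (hic (y - φ x)).1 (by rw [map_sub, sub_eq_zero]; exact hx.symm)
  rw [← add_sub_cancel (φ x) y, ← hu]
  exact Submodule.add_mem_sup ⟨x, rfl⟩ ⟨u, rfl⟩

theorem ker_comp_eq_ker_comp_of_exact (hic : Function.Exact i c) (hj : Function.Exact j (c ∘ₗ φ))
    (hφ : φ ∘ₗ j = i ∘ₗ e) (hθ : Function.Exact (i ∘ₗ e) θ) :
    LinearMap.ker (θ ∘ₗ φ) = LinearMap.ker (c ∘ₗ φ) := by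
  ext x
  refine ⟨fun hx => ?_, fun hx => ?_⟩
  · obtain ⟨a, ha⟩ := (hθ (φ x)).1 hx
    exact (congrArg c ha.symm).trans (hic.apply_apply_eq_zero (e a))
  · obtain ⟨a, rfl⟩ := (hj x).1 hx
    exact (congrArg θ (LinearMap.congr_fun hφ a)).trans (hθ.apply_apply_eq_zero a)

theorem isCompl_range_of_exact (hic : Function.Exact i c) (hj : Function.Exact j (c ∘ₗ φ))
    (hcφ : Function.Surjective (c ∘ₗ φ)) (hφ : φ ∘ₗ j = i ∘ₗ e)
    (hθ : Function.Exact (i ∘ₗ e) θ) (hθs : Function.Surjective θ) :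
    IsCompl (LinearMap.range (θ ∘ₗ φ)) (LinearMap.range (θ ∘ₗ i)) := by
  refine ⟨Submodule.disjoint_def.2 ?_, codisjoint_iff.2 ?_⟩
  · rintro _ ⟨x, rfl⟩ ⟨u, hu⟩
    obtain ⟨a, ha⟩ := (hθ (φ x - i u)).1 (by rw [map_sub, sub_eq_zero]; exact hu.symm)
    have hx : c (φ x) = c (i u) := by
      rw [← sub_eq_zero, ← map_sub, ← ha]
      exact hic.apply_apply_eq_zero (e a)
    exact (ker_comp_eq_ker_comp_of_exact hic hj hφ hθ).ge (hx.trans (hic.apply_apply_eq_zero u))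
  · rw [LinearMap.range_comp, LinearMap.range_comp, ← Submodule.map_sup,
      range_sup_range_eq_top_of_exact hic hcφ, Submodule.map_top, LinearMap.range_eq_top.2 hθs]

end ExactDiagrams

section TiltingTorsionPair

attribute [local instance] Abelian.hasFiniteBiproducts

variable {H : Type u} [Category.{v} H] [Abelian H] {T : H} [EndAction R T]

variable (R T) in
/-- `M` lies in the torsion-free class of the torsion pair of left `R`-modules induced by the
tilting object `T`: it is `Hom(T, X)` for some `X` with `Ext¹(T, X) = 0`. -/
def IsTiltingTorsionFree (M : ModuleCat.{0} R) : Prop :=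
  ∃ X : H, ExtSplits T X ∧ Nonempty (M ≃ₗ[R] (T ⟶ X))

theorem exists_homMap_presentation [IsNoetherianRing R] (M : Type*) [AddCommGroup M] [Module R M]
    [Module.Finite R M] :
    ∃ (m n : ℕ) (f : (⨁ fun _ : Fin m => T) ⟶ ⨁ fun _ : Fin n => T)
      (θ : (T ⟶ ⨁ fun _ : Fin n => T) →ₗ[R] M),
      Function.Exact (homMap R T f) θ ∧ Function.Surjective θ := by
  obtain ⟨n, q, hq⟩ := Module.Finite.exists_fin' R M
  let θ := q ∘ₗ (homPowerEquiv R T n).toLinearMap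
  have : IsNoetherian R (T ⟶ ⨁ fun _ : Fin n => T) :=
    isNoetherian_of_linearEquiv (homPowerEquiv R T n).symm
  obtain ⟨m, r, hr⟩ := Module.Finite.exists_fin' R (LinearMap.ker θ)
  obtain ⟨f, hf⟩ := exists_homMap_eq_of_power
    ((LinearMap.ker θ).subtype ∘ₗ r ∘ₗ (homPowerEquiv R T m).toLinearMap)
  refine ⟨m, n, f, θ, ?_, hq.comp (homPowerEquiv R T n).surjective⟩
  rw [LinearMap.exact_iff, hf, LinearMap.range_comp_of_range_eq_top, Submodule.range_subtype]
  exact LinearMap.range_eq_top.2 (hr.comp (homPowerEquiv R T m).surjective)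

variable [IsHereditary H]

theorem exists_section_of_surjective_homMap {n : ℕ} {K Q X : H} {k : K ⟶ ⨁ fun _ : Fin n => T}
    {p : (⨁ fun _ : Fin n => T) ⟶ X} {w : k ≫ p = 0} (hkp : (ShortComplex.mk k p w).ShortExact)
    (hQ : ExtSplits T Q) (q : Q ⟶ K) [Epi q] (hq : Function.Surjective (homMap R T q)) :
    ∃ s : K ⟶ Q, s ≫ q = 𝟙 K := by
  obtain ⟨E, i, r, w', φ, hir, hiφ, hφ⟩ := IsHereditary.exists_lift q hkp
  have hφsurj : Function.Surjective (homMap R T φ) := by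
    have hle : LinearMap.range (homMap R T k) ≤ LinearMap.range (homMap R T φ) := by
      rw [← LinearMap.range_comp_of_range_eq_top _ (LinearMap.range_eq_top.2 hq), ← homMap_comp,
        ← hiφ, homMap_comp]
      exact LinearMap.range_comp_le_range _ _
    rw [← LinearMap.range_eq_top, ← sup_eq_left.2 hle]
    refine range_sup_range_eq_top_of_exact (exact_homMap hkp) ?_
    rw [← homMap_comp, hφ]
    exact hQ.exists_lift hir
  choose σ hσ using fun j => hφsurj (biproduct.ι (fun _ => T) j)
  have hs : biproduct.desc σ ≫ φ = 𝟙 _ := biproduct.hom_ext' _ _ fun j => by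
    simpa using hσ j
  have := hkp.mono_f
  have := hir.mono_f
  have hzero : (k ≫ biproduct.desc σ) ≫ r = 0 := by
    rw [← hφ, Category.assoc, reassoc_of% hs, w]
  refine ⟨hir.exact.lift _ hzero, (cancel_mono k).1 ?_⟩
  rw [Category.assoc, ← hiφ, ← Category.assoc,
    show hir.exact.lift _ hzero ≫ i = _ from hir.exact.lift_f _ hzero, Category.assoc, hs,
    Category.comp_id, Category.id_comp]

variable [IsTiltingObject T]

theorem isTorsion_range_of_comp_homMap_eq_zero [∀ X : H, Module.Finite R (T ⟶ X)] {m : ℕ} {I : H}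
    (e : (⨁ fun _ : Fin m => T) ⟶ I) [Epi e] {M : Type*} [AddCommGroup M] [Module R M]
    {b : (T ⟶ I) →ₗ[R] M} (hb : b ∘ₗ homMap R T e = 0) :
    IsTorsion (IsTiltingTorsionFree R T) (LinearMap.range b) := by
  rintro N ⟨X, -, ⟨eN⟩⟩ t
  have hI : ExtSplits T I := (IsTiltingObject.extSplits_power m).of_epi e
  obtain ⟨a, ha⟩ := hI.exists_homMap_eq (eN.toLinearMap ∘ₗ t ∘ₗ b.rangeRestrict)
  have hbe (x : T ⟶ ⨁ fun _ : Fin m => T) : b.rangeRestrict (x ≫ e) = 0 :=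
    Subtype.ext (LinearMap.congr_fun hb x)
  have hea : e ≫ a = 0 := biproduct.hom_ext' _ _ fun j => by
    have hj := LinearMap.congr_fun ha (biproduct.ι (fun _ : Fin m => T) j ≫ e)
    simpa [hbe] using hj
  have ha0 : a = 0 := (cancel_epi e).1 (by rw [hea, comp_zero])
  refine (LinearMap.cancel_right b.surjective_rangeRestrict).1 (LinearMap.ext fun x =>
    eN.injective ?_)
  simpa [ha0] using (LinearMap.congr_fun ha x).symm

theorem exists_isCompl_isTiltingTorsionFree [IsNoetherianRing R]
    [∀ X : H, Module.Finite R (T ⟶ X)] (M : Type) [AddCommGroup M] [Module R M]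
    [Module.Finite R M] :
    ∃ A B : Submodule R M, IsCompl A B ∧ IsTiltingTorsionFree R T (.of R A) ∧
      IsTorsion (IsTiltingTorsionFree R T) B := by
  obtain ⟨m, n, f, θ, hfθ, hθ⟩ := exists_homMap_presentation (R := R) (T := T) M
  let e := Abelian.factorThruImage f
  have hic := shortExact_kernel (cokernel.π f)
  obtain ⟨E, j, p, w, φ, hjp, hjφ, hφ⟩ := IsHereditary.exists_lift e hic
  have hf : homMap R T (kernel.ι (cokernel.π f)) ∘ₗ homMap R T e = homMap R T f := by
    rw [← homMap_comp]
    exact congrArg _ (Abelian.image.fac f)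
  have hjexact := exact_homMap (R := R) (T := T) hjp
  have hsurj : Function.Surjective (homMap R T p) :=
    (IsTiltingObject.extSplits_power m).exists_lift hjp
  have hφj : homMap R T φ ∘ₗ homMap R T j =
      homMap R T (kernel.ι (cokernel.π f)) ∘ₗ homMap R T e := by
    rw [← homMap_comp, hjφ, homMap_comp]
  subst hφ
  rw [homMap_comp] at hjexact hsurj
  rw [← hf] at hfθ
  refine ⟨_, _, isCompl_range_of_exact (exact_homMap hic) hjexact hsurj hφj hfθ hθ,
    ⟨cokernel f, (IsTiltingObject.extSplits_power n).of_epi (cokernel.π f), ⟨?_⟩⟩,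
    isTorsion_range_of_comp_homMap_eq_zero e hfθ.linearMap_comp_eq_zero⟩
  exact (LinearMap.quotKerEquivRange _).symm ≪≫ₗ Submodule.quotEquivOfEq _ _
    (ker_comp_eq_ker_comp_of_exact (exact_homMap hic) hjexact hφj hfθ) ≪≫ₗ
    LinearMap.quotKerEquivOfSurjective _ hsurj

theorem ExtSplits.exists_projective_ker_homMap [∀ X : H, Module.Finite R (T ⟶ X)] {X : H}
    (hX : ExtSplits T X) :
    ∃ (n : ℕ) (p : (⨁ fun _ : Fin n => T) ⟶ X), Function.Surjective (homMap R T p) ∧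
      Module.Projective R (LinearMap.ker (homMap R T p)) := by
  obtain ⟨n, p, _, hp, hK⟩ := hX.exists_epi_power (R := R)
  obtain ⟨m, q, _, hq, -⟩ := hK.exists_epi_power (R := R)
  obtain ⟨s, hs⟩ := exists_section_of_surjective_homMap (shortExact_kernel p)
    (IsTiltingObject.extSplits_power m) q hq
  have : Module.Projective R (T ⟶ ⨁ fun _ : Fin m => T) := .of_equiv (homPowerEquiv R T m).symm
  have : Module.Projective R (T ⟶ kernel p) := .of_split (homMap R T s) (homMap R T q)
    (LinearMap.ext fun x => by simp [hs])
  refine ⟨n, p, hp, .of_equiv (LinearEquiv.ofInjective _ (injective_homMap (kernel.ι p)) ≪≫ₗ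
    LinearEquiv.ofEq _ _ ?_)⟩
  exact (exact_homMap (shortExact_kernel p)).linearMap_ker_eq.symm

theorem isSplitTorsionFreeClass_isTiltingTorsionFree [IsNoetherianRing R]
    [∀ X : H, Module.Finite R (T ⟶ X)] : IsSplitTorsionFreeClass (IsTiltingTorsionFree R T) where
  of_equiv := fun e ⟨X, hX, ⟨f⟩⟩ => ⟨X, hX, ⟨e.symm ≪≫ₗ f⟩⟩
  self_mem := ⟨T, IsTiltingObject.extSplits_self, ⟨homSelfEquiv R T⟩⟩
  exists_isCompl M _ := exists_isCompl_isTiltingTorsionFree M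
  exists_projective_ker := by
    rintro M _ ⟨X, hX, ⟨f⟩⟩
    obtain ⟨n, p, hp, _⟩ := hX.exists_projective_ker_homMap (R := R)
    refine ⟨n, f.symm.toLinearMap ∘ₗ homMap R T p ∘ₗ (homPowerEquiv R T n).symm.toLinearMap,
      f.symm.surjective.comp (hp.comp (LinearEquiv.surjective _)), ?_⟩
    rw [LinearEquiv.ker_comp, LinearMap.ker_comp]
    exact .of_equiv ((homPowerEquiv R T n).symm.ofSubmodule' _).symm

end TiltingTorsionPair

/-! ### Quasitilted algebras -/

namespace QuasitiltedWitness

attribute [local instance] cat ab lin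

variable {K Λ : Type} [Field K] [Ring Λ] [Algebra K Λ]

theorem finiteDimensional (W : QuasitiltedWitness.{u, v} K Λ) : FiniteDimensional K Λ := by
  obtain ⟨φ, hφ⟩ := W.endIso
  have : FiniteDimensional K (W.T ⟶ W.T) := W.homFinite W.T W.T
  let φLin : (W.T ⟶ W.T) →ₗ[K] Λ :=
    { φ.toAddMonoidHom with
      map_smul' := fun k (x : End W.T) => by
        let e : End W.T := k • 𝟙 W.T
        have hkx : (k • x : W.T ⟶ W.T) = e * x := by
          rw [End.mul_def, Linear.comp_smul, Category.comp_id]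
        calc φ (k • x : W.T ⟶ W.T) = φ e * φ x := by rw [hkx, map_mul]
          _ = k • φ x := by rw [hφ, Algebra.smul_def] }
  exact .of_surjective φLin φ.surjective

variable (W : QuasitiltedWitness.{u, v} K Λ)

instance isHereditary : IsHereditary W.H where
  exists_lift g _ _ _ _ hip := W.hereditary _ _ _ _ g _ _ _ ‹_› hip

instance isTiltingObject : IsTiltingObject W.T where
  extSplits_self := W.selfExtVanish
  isZero := W.generates

instance endAction : EndAction Λᵐᵒᵖ W.T where
  endEquiv := RingEquiv.op W.endIso.choose.symm

theorem algebraMap_smul (k : K) {X : W.H} (x : W.T ⟶ X) : algebraMap K Λᵐᵒᵖ k • x = k • x := by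
  have hk : W.endIso.choose.symm (algebraMap K Λ k) = k • 𝟙 W.T := by
    rw [← W.endIso.choose_spec k, RingEquiv.symm_apply_apply]
  calc algebraMap K Λᵐᵒᵖ k • x = W.endIso.choose.symm (algebraMap K Λ k) ≫ x := rfl
    _ = k • x := by rw [hk, Linear.smul_comp, Category.id_comp]

instance finite_hom (X : W.H) : Module.Finite Λᵐᵒᵖ (W.T ⟶ X) :=
  have : FiniteDimensional K (W.T ⟶ X) := W.homFinite W.T X
  have : IsScalarTower K Λᵐᵒᵖ (W.T ⟶ X) := .of_algebraMap_smul fun k x => W.algebraMap_smul k x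
  .of_restrictScalars_finite K Λᵐᵒᵖ (W.T ⟶ X)

theorem isSplitTorsionFreeClass [IsNoetherianRing Λᵐᵒᵖ] :
    IsSplitTorsionFreeClass (IsTiltingTorsionFree Λᵐᵒᵖ W.T) :=
  isSplitTorsionFreeClass_isTiltingTorsionFree

end QuasitiltedWitness

theorem tau_tilting_finite_quasitilted_is_rep_finite_general
    (K Λ : Type) [Field K] [Ring Λ] [Algebra K Λ]
    (hq : IsQuasitilted.{u, v} K Λ) (ht : IsTauTiltingFinite Λ) : IsRepFinite Λ := by
  obtain ⟨W⟩ := hq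
  have : FiniteDimensional K Λ := W.finiteDimensional
  have : IsArtinAlgebra Λᵐᵒᵖ := .of_finite K
  have hgen : HasFinitelyManyTauRigidGen Λᵐᵒᵖ :=
    IsTauTiltingFiniteRing.hasFinitelyManyTauRigidGen ht
  exact W.isSplitTorsionFreeClass.isRepFiniteRing hgen

/-- Corollary 4.2 of the paper.  Every τ-tilting-finite
quasitilted algebra over an algebraically closed field is
representation-finite. -/
theorem tau_tilting_finite_quasitilted_is_rep_finite
    (K Λ : Type) [Field K] [IsAlgClosed K] [Ring Λ] [Algebra K Λ] [FiniteDimensional K Λ]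
    (hq : IsQuasitilted.{u, v} K Λ)
    (ht : IsTauTiltingFinite Λ) :
    IsRepFinite Λ := by
  exact tau_tilting_finite_quasitilted_is_rep_finite_general K Λ hq ht

end PaperSilting
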